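/- arXiv:2107.03154 — 4 statements merged into one kernel-verified Lean document; each statement's English description precedes it below -/
import Mathlib

section
/- Let the free group F be the free product F = F₁ ∗ F₂ (e.g., F is the free group on a disjoint union A₁ ⊔ A₂ of two sets, F₁ is the subgroup generated by A₁, and F₂ is the subgroup generated by A₂). Let H₁ ≤ F₁ and H₂ ≤ F₂ be finitely generated subgroups. If H₁ is a dependence-closed subgroup of F₁ and H₂ is a dependence-closed subgroup of F₂, then H₁ ∗ H₂ = ⟨H₁, H₂⟩ is a dependence-closed subgroup of F. -/
open scoped Monoid.Coprod

variable {F : Type*}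

/-- The canonical homomorphism `φ_g : H ∗ ⟨x⟩ → F` from the free product of `H` with an
infinite cyclic group (the free group on one generator `x`), restricting to the inclusion
`H ↪ F` and sending `x` to `g`. -/
noncomputable def phi [Group F] (H : Subgroup F) (g : F) :
    (↥H ∗ FreeGroup Unit) →* F :=
  Monoid.Coprod.lift H.subtype (FreeGroup.lift fun _ => g)

/-- `g` depends on `H` (is algebraic over `H`) if `φ_g` is not injective. -/
def Depends [Group F] (H : Subgroup F) (g : F) : Prop :=
  ¬ Function.Injective (phi H g)

/-- `dep H`: the set of elements of `F` that depend on `H`. -/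
def depSet [Group F] (H : Subgroup F) : Set F := {g | Depends H g}

/-- `Dep H`: the subgroup generated by the elements that depend on `H`. -/
noncomputable def DepSubgroup [Group F] (H : Subgroup F) : Subgroup F :=
  Subgroup.closure (depSet H)

/-- The rank of a subgroup: the minimal cardinality of a generating set. For subgroups of
free groups this equals the cardinality of a free basis. -/
noncomputable def rk [Group F] (H : Subgroup F) : Cardinal :=
  ⨅ S : {S : Set F // Subgroup.closure S = H}, Cardinal.mk S.1


/-- `F` is the internal free product of its subgroups `F₁` and `F₂`: the canonical
homomorphism `F₁ ∗ F₂ → F` induced by the inclusions is bijective. -/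
def IsInternalFreeProduct [Group F] (F₁ F₂ : Subgroup F) : Prop :=
  Function.Bijective (Monoid.Coprod.lift F₁.subtype F₂.subtype)

/-- Every nontrivial element of a free group acts nontrivially in some action on a finite set. -/
theorem FreeGroup.exists_finite_perm_ne_one {α : Type*} (w : FreeGroup α) (hw : w ≠ 1) :
    ∃ (P : Set (FreeGroup α)) (_ : Finite P) (f : FreeGroup α →* Equiv.Perm P), f w ≠ 1 := by
  classical
  obtain ⟨L, rfl⟩ : ∃ L, FreeGroup.mk L = w := ⟨w.toWord, FreeGroup.mk_toWord⟩
  let P : Set (FreeGroup α) := FreeGroup.mk '' {s | s ∈ L.tails}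
  have hfin : Finite P := ((List.finite_toSet L.tails).image _).to_subtype
  have hP : ∀ s, s <:+ L → FreeGroup.mk s ∈ P := fun s hs => ⟨s, (List.mem_tails ..).2 hs, rfl⟩
  let p : α → P → Prop := fun a x => FreeGroup.of a * x ∈ P
  let q : α → P → Prop := fun a x => (FreeGroup.of a)⁻¹ * x ∈ P
  let e : ∀ a, {x // p a x} ≃ {x // q a x} := fun a =>
    { toFun := fun x => ⟨⟨FreeGroup.of a * x, x.2⟩, by simp [q]⟩
      invFun := fun x => ⟨⟨(FreeGroup.of a)⁻¹ * x, x.2⟩, by simp [p]⟩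
      left_inv := fun x => by simp
      right_inv := fun x => by simp }
  have := Fintype.ofFinite P
  let σ : α → Equiv.Perm P := fun a => (e a).extendSubtype
  have hσ : ∀ a (x : P) (h : FreeGroup.of a * (x : FreeGroup α) ∈ P), σ a x = ⟨FreeGroup.of a * x, h⟩ :=
    fun a x h => (e a).extendSubtype_apply_of_mem x h
  have h1 : (1 : FreeGroup α) ∈ P := hP [] (List.nil_suffix)
  have key : ∀ s (hs : s <:+ L), FreeGroup.lift σ (FreeGroup.mk s) ⟨1, h1⟩ =
      ⟨FreeGroup.mk s, hP s hs⟩ := by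
    intro s
    induction s with
    | nil => intro hs; simp [← FreeGroup.one_eq_mk]
    | cons c s ih =>
      intro hs
      have hs' : s <:+ L := (List.suffix_cons c s).trans hs
      obtain ⟨a, b⟩ := c
      have hmk : FreeGroup.mk ((a, b) :: s) = FreeGroup.mk [(a, b)] * FreeGroup.mk s := by
        simp [FreeGroup.mul_mk]
      have hmem := hP _ hs
      simp only [hmk] at hmem ⊢
      rw [MonoidHom.map_mul, Equiv.Perm.mul_apply, ih hs']
      cases b with
      | true =>
        have : FreeGroup.mk [(a, true)] = FreeGroup.of a := rfl
        simp only [this] at hmem ⊢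
        rw [FreeGroup.lift_apply_of]
        exact hσ a ⟨_, hP s hs'⟩ hmem
      | false =>
        have : FreeGroup.mk [(a, false)] = (FreeGroup.of a)⁻¹ := rfl
        simp only [this] at hmem ⊢
        rw [MonoidHom.map_inv, FreeGroup.lift_apply_of, Equiv.Perm.inv_eq_iff_eq,
          hσ a ⟨_, hmem⟩ (by simpa using hP s hs')]
        simp
  refine ⟨P, hfin, FreeGroup.lift σ, fun h => hw ?_⟩
  have := key L (List.suffix_refl L)
  rw [h] at this
  simpa using (congrArg Subtype.val this).symm

/-- Free groups are residually finite. -/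
theorem IsFreeGroup.residuallyFinite (G : Type*) [Group G] [IsFreeGroup G] :
    Group.ResiduallyFinite G := by
  refine Group.residuallyFinite_of_forall_exists_finite_monoidHom fun g hg => ?_
  obtain ⟨P, hP, f, hf⟩ := FreeGroup.exists_finite_perm_ne_one
    (IsFreeGroup.toFreeGroup G g) (by simpa using hg)
  exact ⟨Equiv.Perm P, inferInstance, inferInstance,
    f.comp (IsFreeGroup.toFreeGroup G).toMonoidHom, hf⟩

/-- Finitely generated residually finite groups are Hopfian. -/
theorem Group.ResiduallyFinite.injective_of_surjective {G : Type*} [Group G] [Group.FG G]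
    [Group.ResiduallyFinite G] (f : G →* G) (hf : Function.Surjective f) :
    Function.Injective f := by
  rw [injective_iff_map_eq_one]
  intro k hk
  refine Group.eq_one_iff_forall_finiteIndexNormalSubroup k fun N => ?_
  obtain ⟨S, hS, hSf⟩ := Group.fg_iff.1 ‹Group.FG G›
  have := hSf.to_subtype
  have hfin : Finite (G →* G ⧸ N.toSubgroup) := by
    refine Finite.of_injective (β := S → G ⧸ N.toSubgroup) (fun ρ s => ρ s) fun ρ ρ' h => ?_
    exact MonoidHom.eq_of_eqOn_dense hS fun s hs => congrFun h ⟨s, hs⟩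
  have hinj : Function.Injective fun ρ : G →* G ⧸ N.toSubgroup => ρ.comp f :=
    fun ρ ρ' h => (MonoidHom.cancel_right hf).1 h
  obtain ⟨ρ, hρ⟩ := Finite.surjective_of_injective hinj (QuotientGroup.mk' N.toSubgroup)
  have : QuotientGroup.mk' N.toSubgroup k = 1 := by
    rw [← hρ]; simp [hk]
  exact (QuotientGroup.eq_one_iff k).1 this

/-- The free group on a disjoint union is the free product of the free groups. -/
def FreeGroup.sumEquivCoprod (α β : Type*) :
    FreeGroup (α ⊕ β) ≃* (FreeGroup α ∗ FreeGroup β) :=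
  MonoidHom.toMulEquiv
    (FreeGroup.lift (Sum.elim (fun a => Monoid.Coprod.inl (FreeGroup.of a))
      fun b => Monoid.Coprod.inr (FreeGroup.of b)))
    (Monoid.Coprod.lift (FreeGroup.map Sum.inl) (FreeGroup.map Sum.inr))
    (by ext (a | b) <;> simp)
    (by ext <;> simp)

/-- A basis of a free product with a free group. -/
noncomputable def FreeGroupBasis.coprodFreeGroup {ι G : Type*} [Group G] (b : FreeGroupBasis ι G)
    (β : Type*) : FreeGroupBasis (ι ⊕ β) (G ∗ FreeGroup β) :=
  .ofRepr ((FreeGroup.sumEquivCoprod ι β).trans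
    (MulEquiv.coprodCongr b.repr (MulEquiv.refl _)).symm).symm

/-- An embedding of bases induces a surjection of free groups in the other direction. -/
theorem FreeGroupBasis.exists_surjective {ι κ G G' : Type*} [Group G] [Group G']
    (b : FreeGroupBasis ι G) (b' : FreeGroupBasis κ G') (j : κ ↪ ι) :
    ∃ f : G →* G', Function.Surjective f := by
  refine ⟨b.lift (Function.extend j b' 1), fun y => ⟨b'.lift (fun k => b (j k)) y, ?_⟩⟩
  have : (b.lift (Function.extend j b' 1)).comp (b'.lift fun k => b (j k)) = .id G' :=
    b'.ext_hom _ _ fun k => by simp [j.injective.extend_apply]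
  exact DFunLike.congr_fun this y

instance Monoid.Coprod.group_fg (G H : Type*) [Group G] [Group H] [Group.FG G] [Group.FG H] :
    Group.FG (G ∗ H) := by
  rw [Group.fg_def, ← Monoid.Coprod.range_inl_sup_range_inr]
  exact ((Group.fg_iff_subgroup_fg _).1 inferInstance).sup
    ((Group.fg_iff_subgroup_fg _).1 inferInstance)

/-- A cocycle `F₁ → (F ⧸ K → G)` restricting to a given homomorphism on `K ⊓ F₁` at the
base coset. -/
theorem exists_hom_semidirectProduct [Group F] (K F₁ : Subgroup F) {G : Type*} [Group G]
    (α : ↥(K ⊓ F₁) →* G) :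
    ∃ a : F₁ →* (F ⧸ K → G) ⋊[mulAutArrow] F, (∀ f, (a f).right = f) ∧
      ∀ k (hk : k ∈ K ⊓ F₁), (a ⟨k, hk.2⟩).left ((1 : F) : F ⧸ K) = α ⟨k, hk⟩ := by
  classical
  let O : Set (F ⧸ K) := {x | ∃ f ∈ F₁, ((f : F) : F ⧸ K) = x}
  have hs : ∀ x : F ⧸ K, ∃ f : F, x ∈ O → f ∈ F₁ ∧ ((f : F) : F ⧸ K) = x := fun x => by
    by_cases hx : x ∈ O
    · obtain ⟨f, hf⟩ := hx
      exact ⟨f, fun _ => hf⟩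
    · exact ⟨1, fun h => absurd h hx⟩
  choose s₀ hs₀ using hs
  let s : F ⧸ K → F := Function.update s₀ ((1 : F) : F ⧸ K) 1
  have hs1 : s ((1 : F) : F ⧸ K) = 1 := by simp [s]
  have hs : ∀ x ∈ O, s x ∈ F₁ ∧ (s x : F ⧸ K) = x := fun x hx => by
    by_cases h : x = ((1 : F) : F ⧸ K)
    · rw [h, hs1]; exact ⟨F₁.one_mem, rfl⟩
    · simpa [s, Function.update_of_ne h] using hs₀ x hx
  have hO : ∀ f ∈ F₁, ∀ x ∈ O, f⁻¹ • x ∈ O := by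
    rintro f hf _ ⟨y, hy, rfl⟩
    exact ⟨f⁻¹ * y, F₁.mul_mem (F₁.inv_mem hf) hy, rfl⟩
  have hO' : ∀ f ∈ F₁, ∀ x ∉ O, f⁻¹ • x ∉ O := fun f hf x hx h => hx <| by
    simpa using hO f⁻¹ (F₁.inv_mem hf) _ h
  have hmem : ∀ f ∈ F₁, ∀ x ∈ O, (s x)⁻¹ * f * s (f⁻¹ • x) ∈ K ⊓ F₁ := fun f hf x hx => by
    obtain ⟨h1, h2⟩ := hs x hx
    obtain ⟨h3, h4⟩ := hs _ (hO f hf x hx)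
    refine ⟨?_, F₁.mul_mem (F₁.mul_mem (F₁.inv_mem h1) hf) h3⟩
    rw [mul_assoc]
    refine QuotientGroup.eq.1 ?_
    rw [h2]
    change x = f • ((s (f⁻¹ • x) : F) : F ⧸ K)
    rw [h4, smul_inv_smul]
  let n : F₁ → F ⧸ K → G := fun f x =>
    if hx : x ∈ O then α ⟨_, hmem f f.2 x hx⟩ else 1
  have hn : ∀ (f f' : F₁) x, n (f * f') x = n f x * n f' ((f : F)⁻¹ • x) := fun f f' x => by
    by_cases hx : x ∈ O
    · have hx' := hO f f.2 x hx
      simp only [n, dif_pos hx, dif_pos hx', ← map_mul]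
      congr 1
      ext
      simp [mul_smul, mul_assoc]
    · simp [n, dif_neg hx, dif_neg (hO' f f.2 x hx)]
  refine ⟨MonoidHom.mk' (fun f => ⟨n f, f⟩) fun f f' => ?_, fun f => rfl, fun k hk => ?_⟩
  · refine SemidirectProduct.ext ?_ rfl
    funext x
    exact hn f f' x
  · have h1 : ((1 : F) : F ⧸ K) ∈ O := ⟨1, F₁.one_mem, rfl⟩
    have h2 : k⁻¹ • ((1 : F) : F ⧸ K) = ((1 : F) : F ⧸ K) := by
      change ((k⁻¹ * 1 : F) : F ⧸ K) = _
      rw [QuotientGroup.eq]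
      simpa using hk.1
    change n _ _ = _
    simp only [n, dif_pos h1]
    congr 1
    ext
    simp [h2, hs1]

/-- In a free product `F = F₁ ∗ F₂`, homomorphisms defined on `K ⊓ F₁` and `K ⊓ F₂` extend
simultaneously to the subgroup `K`. -/
theorem IsInternalFreeProduct.exists_extension [Group F] {F₁ F₂ : Subgroup F}
    (hF : IsInternalFreeProduct F₁ F₂) (K : Subgroup F) {G : Type*} [Group G]
    (α₁ : ↥(K ⊓ F₁) →* G) (α₂ : ↥(K ⊓ F₂) →* G) :
    ∃ ψ : K →* G, (∀ k (hk : k ∈ K ⊓ F₁), ψ ⟨k, hk.1⟩ = α₁ ⟨k, hk⟩) ∧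
      ∀ k (hk : k ∈ K ⊓ F₂), ψ ⟨k, hk.1⟩ = α₂ ⟨k, hk⟩ := by
  obtain ⟨a₁, hr₁, ha₁⟩ := exists_hom_semidirectProduct K F₁ α₁
  obtain ⟨a₂, hr₂, ha₂⟩ := exists_hom_semidirectProduct K F₂ α₂
  let e := MulEquiv.ofBijective _ hF
  let A : F →* (F ⧸ K → G) ⋊[mulAutArrow] F :=
    (Monoid.Coprod.lift a₁ a₂).comp e.symm.toMonoidHom
  have hA₁ : ∀ f : F₁, A f = a₁ f := fun f => by
    have : e.symm (f : F) = Monoid.Coprod.inl f := by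
      rw [MulEquiv.symm_apply_eq]; exact (Monoid.Coprod.lift_apply_inl F₁.subtype F₂.subtype f).symm
    simp [A, this]
  have hA₂ : ∀ f : F₂, A f = a₂ f := fun f => by
    have : e.symm (f : F) = Monoid.Coprod.inr f := by
      rw [MulEquiv.symm_apply_eq]; exact (Monoid.Coprod.lift_apply_inr F₁.subtype F₂.subtype f).symm
    simp [A, this]
  have hAr : ∀ f, (A f).right = f := by
    have : (SemidirectProduct.rightHom.comp (Monoid.Coprod.lift a₁ a₂)) =
        Monoid.Coprod.lift F₁.subtype F₂.subtype := by
      ext f <;> simp [hr₁, hr₂]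
    intro f
    have h := DFunLike.congr_fun this (e.symm f)
    exact h.trans (e.apply_symm_apply f)
  refine ⟨MonoidHom.mk' (fun k => (A k).left ((1 : F) : F ⧸ K)) fun k k' => ?_,
    fun k hk => ?_, fun k hk => ?_⟩
  · have h2 : (k : F)⁻¹ • ((1 : F) : F ⧸ K) = ((1 : F) : F ⧸ K) := by
      change (((k : F)⁻¹ * 1 : F) : F ⧸ K) = _
      rw [QuotientGroup.eq]
      simp
    simp only [Subgroup.coe_mul, map_mul, SemidirectProduct.mul_left, Pi.mul_apply, hAr]
    congr 1
    change (A k').left ((k : F)⁻¹ • ((1 : F) : F ⧸ K)) = _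
    rw [h2]
  · exact (congrArg (fun y => y.left ((1 : F) : F ⧸ K)) (hA₁ ⟨k, hk.2⟩)).trans (ha₁ k hk)
  · exact (congrArg (fun y => y.left ((1 : F) : F ⧸ K)) (hA₂ ⟨k, hk.2⟩)).trans (ha₂ k hk)

theorem IsInternalFreeProduct.symm [Group F] {F₁ F₂ : Subgroup F}
    (hF : IsInternalFreeProduct F₁ F₂) : IsInternalFreeProduct F₂ F₁ := by
  have h : ⇑(Monoid.Coprod.lift F₂.subtype F₁.subtype) =
      Monoid.Coprod.lift F₁.subtype F₂.subtype ∘ MulEquiv.coprodComm F₂ F₁ := by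
    funext x
    exact (Monoid.Coprod.lift_swap _ _ x).symm
  unfold IsInternalFreeProduct
  rw [h]
  exact Function.Bijective.comp hF (MulEquiv.bijective _)

theorem phi_range [Group F] (H : Subgroup F) (g : F) :
    (phi H g).range = H ⊔ Subgroup.zpowers g := by
  rw [phi, Monoid.Coprod.range_lift, FreeGroup.range_lift_eq_closure, Subgroup.range_subtype,
    Set.range_const, Subgroup.zpowers_eq_closure]

@[simp]
theorem phi_inl [Group F] (H : Subgroup F) (g : F) (h : H) :
    phi H g (Monoid.Coprod.inl h) = h := by
  simp [phi]

@[simp]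
theorem phi_inr [Group F] (H : Subgroup F) (g : F) :
    phi H g (Monoid.Coprod.inr (FreeGroup.of ())) = g := by
  simp [phi]

/-- If `g` does not depend on `H`, then a homomorphism on `H` extends to `⟨H, g⟩` with an
arbitrary value at `g`. -/
theorem exists_extension_of_phi_injective [Group F] {H K : Subgroup F} {g : F}
    (hK : K = H ⊔ Subgroup.zpowers g) (hg : Function.Injective (phi H g))
    {G : Type*} [Group G] (α : H →* G) (t : G) :
    ∃ β : K →* G, (∀ (h : H) (hk : (h : F) ∈ K), β ⟨h, hk⟩ = α h) ∧
      ∀ hk : g ∈ K, β ⟨g, hk⟩ = t := by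
  rw [← phi_range] at hK
  subst hK
  refine ⟨(Monoid.Coprod.lift α (FreeGroup.lift fun _ => t)).comp
    (MonoidHom.ofInjective hg).symm.toMonoidHom, fun h hk => ?_, fun hk => ?_⟩
  · have : (MonoidHom.ofInjective hg).symm ⟨h, hk⟩ = Monoid.Coprod.inl h := by
      rw [MulEquiv.symm_apply_eq]; ext; exact (phi_inl H g h).symm
    simp [this]
  · have : (MonoidHom.ofInjective hg).symm ⟨g, hk⟩ = Monoid.Coprod.inr (FreeGroup.of ()) := by
      rw [MulEquiv.symm_apply_eq]; ext; exact (phi_inr H g).symm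
    simp [this]

theorem exists_extension_of_phi_injective_of_notMem [Group F] {H K : Subgroup F} {g : F}
    (hK : K = H ⊔ Subgroup.zpowers g) (hg : g ∉ H → Function.Injective (phi H g))
    {G : Type*} [Group G] (α : H →* G) :
    ∃ β : K →* G, ∀ (h : H) (hk : (h : F) ∈ K), β ⟨h, hk⟩ = α h := by
  by_cases hgH : g ∈ H
  · have hle : K ≤ H := hK.trans_le (sup_le le_rfl ((Subgroup.zpowers_le).2 hgH))
    exact ⟨α.comp (Subgroup.inclusion hle), fun h hk => rfl⟩
  · obtain ⟨β, hβ, -⟩ := exists_extension_of_phi_injective hK (hg hgH) α 1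
    exact ⟨β, hβ⟩

theorem map_mem_of_eq_sup_zpowers [Group F] {H₁ H₂ K : Subgroup F} {g : F}
    (hK : K = H₁ ⊔ H₂ ⊔ Subgroup.zpowers g) {G : Type*} [Group G] (f : K →* G)
    (M : Subgroup G) (h₁ : ∀ k (hk : k ∈ K), k ∈ H₁ → f ⟨k, hk⟩ ∈ M)
    (h₂ : ∀ k (hk : k ∈ K), k ∈ H₂ → f ⟨k, hk⟩ ∈ M)
    (hg : ∀ hk : g ∈ K, f ⟨g, hk⟩ ∈ M) (k : K) : f k ∈ M := by
  have hH : H₁ ⊔ H₂ ≤ K := hK ▸ le_sup_left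
  have hgK : g ∈ K := hK ▸ Subgroup.mem_sup_right (Subgroup.mem_zpowers g)
  have hle : K ≤ (M.comap f).map K.subtype := by
    conv_lhs => rw [hK]
    refine sup_le (sup_le (fun x hx => ?_) fun x hx => ?_) (Subgroup.zpowers_le.2 ?_)
    · exact ⟨⟨x, hH (Subgroup.mem_sup_left hx)⟩, h₁ _ _ hx, rfl⟩
    · exact ⟨⟨x, hH (Subgroup.mem_sup_right hx)⟩, h₂ _ _ hx, rfl⟩
    · exact ⟨⟨g, hgK⟩, hg _, rfl⟩
  obtain ⟨k', hk', h⟩ := hle k.2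
  rwa [← Subtype.ext h]

/-- If `⟨H₁, H₂, g⟩ = K`, then `K ⊓ F₁` is generated by `H₁` and one more element. -/
theorem IsInternalFreeProduct.exists_inf_eq_sup_zpowers [Group F] {F₁ F₂ : Subgroup F}
    (hF : IsInternalFreeProduct F₁ F₂) {H₁ H₂ K : Subgroup F} (hle₁ : H₁ ≤ F₁) (hle₂ : H₂ ≤ F₂)
    {g : F} (hK : K = H₁ ⊔ H₂ ⊔ Subgroup.zpowers g) :
    ∃ g₁ ∈ F₁, K ⊓ F₁ = H₁ ⊔ Subgroup.zpowers g₁ := by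
  have hH : H₁ ⊔ H₂ ≤ K := hK ▸ le_sup_left
  have hgK : g ∈ K := hK ▸ Subgroup.mem_sup_right (Subgroup.mem_zpowers g)
  obtain ⟨ψ, hψ₁, hψ₂⟩ := hF.exists_extension K (MonoidHom.id _) (1 : ↥(K ⊓ F₂) →* ↥(K ⊓ F₁))
  refine ⟨ψ ⟨g, hgK⟩, (ψ ⟨g, hgK⟩).2.2, le_antisymm (fun k hk => ?_) (sup_le
    (le_inf (le_sup_left.trans hH) hle₁) (Subgroup.zpowers_le.2 (ψ ⟨g, hgK⟩).2))⟩
  have := map_mem_of_eq_sup_zpowers hK ((K ⊓ F₁).subtype.comp ψ)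
    (H₁ ⊔ Subgroup.zpowers (ψ ⟨g, hgK⟩ : F))
    (fun k hk hk₁ => by
      rw [MonoidHom.comp_apply, hψ₁ k ⟨hk, hle₁ hk₁⟩]
      exact Subgroup.mem_sup_left hk₁)
    (fun k hk hk₂ => by
      rw [MonoidHom.comp_apply, hψ₂ k ⟨hk, hle₂ hk₂⟩]
      exact Subgroup.one_mem _)
    (fun _ => Subgroup.mem_sup_right (Subgroup.mem_zpowers _)) ⟨k, hk.1⟩
  rwa [MonoidHom.comp_apply, hψ₁ k hk] at this

/-- If `⟨H, g⟩` maps onto `H ∗ ⟨x⟩`, then `g` does not depend on `H`. -/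
theorem phi_injective_of_surjective [Group F] [IsFreeGroup F] {H K : Subgroup F} (hfg : H.FG)
    {g : F} (hK : K = H ⊔ Subgroup.zpowers g) (ψ : K →* (H ∗ FreeGroup Unit))
    (hψ : Function.Surjective ψ) : Function.Injective (phi H g) := by
  rw [← phi_range] at hK
  subst hK
  have : Group.FG H := (Group.fg_iff_subgroup_fg H).2 hfg
  have : IsFreeGroup (H ∗ FreeGroup Unit) :=
    ((IsFreeGroup.basis H).coprodFreeGroup Unit).isFreeGroup
  have := IsFreeGroup.residuallyFinite (H ∗ FreeGroup Unit)
  have h := Group.ResiduallyFinite.injective_of_surjective (ψ.comp (phi H g).rangeRestrict)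
    (hψ.comp (phi H g).rangeRestrict_surjective)
  exact (MonoidHom.rangeRestrict_injective_iff).1 (Function.Injective.of_comp (f := ψ) h)

theorem IsInternalFreeProduct.inf_eq_of_depends [Group F] [IsFreeGroup F] {F₁ F₂ : Subgroup F}
    (hF : IsInternalFreeProduct F₁ F₂) {H₁ H₂ K : Subgroup F} (hle₁ : H₁ ≤ F₁) (hle₂ : H₂ ≤ F₂)
    (hfg₁ : H₁.FG) (hfg₂ : H₂.FG)
    (hc₁ : ∀ g ∈ F₁, g ∉ H₁ → Function.Injective (phi H₁ g))
    (hc₂ : ∀ g ∈ F₂, g ∉ H₂ → Function.Injective (phi H₂ g))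
    {g : F} (hK : K = H₁ ⊔ H₂ ⊔ Subgroup.zpowers g) (hg : Depends (H₁ ⊔ H₂) g) :
    K ⊓ F₁ = H₁ := by
  obtain ⟨g₁, hg₁, hK₁⟩ := hF.exists_inf_eq_sup_zpowers hle₁ hle₂ hK
  obtain ⟨g₂, hg₂, hK₂⟩ :=
    hF.symm.exists_inf_eq_sup_zpowers hle₂ hle₁ (hK.trans (by rw [sup_comm H₁ H₂]))
  by_cases hgH₁ : g₁ ∈ H₁
  · rw [hK₁, sup_eq_left, Subgroup.zpowers_le]
    exact hgH₁
  refine absurd ?_ hg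
  let H := H₁ ⊔ H₂
  have hHK : H ≤ K := hK ▸ le_sup_left
  obtain ⟨α₁, hα₁, hα₁g⟩ := exists_extension_of_phi_injective hK₁ (hc₁ g₁ hg₁ hgH₁)
    ((Monoid.Coprod.inl : H →* (H ∗ FreeGroup Unit)).comp (Subgroup.inclusion le_sup_left))
    (Monoid.Coprod.inr (FreeGroup.of ()))
  obtain ⟨α₂, hα₂⟩ := exists_extension_of_phi_injective_of_notMem hK₂ (hc₂ g₂ hg₂)
    ((Monoid.Coprod.inl : H →* (H ∗ FreeGroup Unit)).comp (Subgroup.inclusion le_sup_right))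
  obtain ⟨ψ, hψ₁, hψ₂⟩ := hF.exists_extension K α₁ α₂
  refine phi_injective_of_surjective (hfg₁.sup hfg₂) hK ψ ?_
  have hψH : ψ.comp (Subgroup.inclusion hHK) = Monoid.Coprod.inl := by
    refine MonoidHom.ext fun x => ?_
    have hle : H ≤ ((ψ.comp (Subgroup.inclusion hHK)).eqLocus Monoid.Coprod.inl).map
        H.subtype := by
      refine sup_le (fun y hy => ?_) fun y hy => ?_
      · refine ⟨⟨y, Subgroup.mem_sup_left hy⟩, ?_, rfl⟩
        have hyK : y ∈ K ⊓ F₁ := ⟨hHK (Subgroup.mem_sup_left hy), hle₁ hy⟩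
        exact (hψ₁ y hyK).trans (hα₁ ⟨y, hy⟩ hyK)
      · refine ⟨⟨y, Subgroup.mem_sup_right hy⟩, ?_, rfl⟩
        have hyK : y ∈ K ⊓ F₂ := ⟨hHK (Subgroup.mem_sup_right hy), hle₂ hy⟩
        exact (hψ₂ y hyK).trans (hα₂ ⟨y, hy⟩ hyK)
    obtain ⟨x', hx', h⟩ := hle x.2
    rwa [← Subtype.ext h]
  have hg₁K : g₁ ∈ K ⊓ F₁ := hK₁ ▸ Subgroup.mem_sup_right (Subgroup.mem_zpowers g₁)
  rw [← MonoidHom.range_eq_top, eq_top_iff, ← Monoid.Coprod.range_inl_sup_range_inr]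
  refine sup_le ?_ ?_
  · rw [← hψH]
    rintro _ ⟨x, rfl⟩
    exact ⟨_, rfl⟩
  · rw [MonoidHom.range_eq_map, ← FreeGroup.closure_range_of, MonoidHom.map_closure,
      Subgroup.closure_le]
    rintro _ ⟨_, ⟨u, rfl⟩, rfl⟩
    exact ⟨⟨g₁, hg₁K.1⟩, (hψ₁ g₁ hg₁K).trans (hα₁g hg₁K)⟩

/-- If `⟨H, g⟩` retracts onto `H` and `g` depends on `H`, then `g ∈ H`. -/
theorem mem_of_depends_of_retraction [Group F] [IsFreeGroup F] {H K : Subgroup F} (hfg : H.FG)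
    {g : F} (hK : K = H ⊔ Subgroup.zpowers g) (r : K →* H)
    (hr : ∀ (h : H) (hk : (h : F) ∈ K), r ⟨h, hk⟩ = h) (hg : Depends H g) : g ∈ H := by
  have hHK : H ≤ K := hK ▸ le_sup_left
  have hgK : g ∈ K := hK ▸ Subgroup.mem_sup_right (Subgroup.mem_zpowers g)
  have : Group.FG H := (Group.fg_iff_subgroup_fg H).2 hfg
  have := IsFreeGroup.residuallyFinite H
  have hrs : Function.Surjective r := fun h => ⟨⟨h, hHK h.2⟩, hr h _⟩
  let b := IsFreeGroup.basis H
  let c := IsFreeGroup.basis K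
  rcases le_or_gt (Cardinal.mk (IsFreeGroup.Generators K))
    (Cardinal.mk (IsFreeGroup.Generators H)) with hle | hlt
  · obtain ⟨j⟩ := hle
    obtain ⟨f, hf⟩ := b.exists_surjective c j
    have hinj := Group.ResiduallyFinite.injective_of_surjective (r.comp f) (hrs.comp hf)
    have hrinj : Function.Injective r := by
      intro x y hxy
      obtain ⟨x, rfl⟩ := hf x
      obtain ⟨y, rfl⟩ := hf y
      rw [hinj hxy]
    have := hrinj (hr (r ⟨g, hgK⟩) (hHK (r ⟨g, hgK⟩).2))
    have h : ((r ⟨g, hgK⟩ : H) : F) = g := congrArg Subtype.val this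
    exact h ▸ (r ⟨g, hgK⟩).2
  · have hle : Cardinal.mk (IsFreeGroup.Generators H ⊕ Unit) ≤
        Cardinal.mk (IsFreeGroup.Generators K) := by
      rw [← Cardinal.mk_congr (Equiv.optionEquivSumPUnit _), Cardinal.mk_option]
      exact Cardinal.add_one_le_of_lt hlt
    obtain ⟨j⟩ := hle
    obtain ⟨f, hf⟩ := c.exists_surjective (b.coprodFreeGroup Unit) j
    exact absurd (phi_injective_of_surjective hfg hK f hf) hg

theorem depends_of_mem [Group F] {H : Subgroup F} {g : F} (hg : g ∈ H) : Depends H g := by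
  intro h
  have : (Monoid.Coprod.inl ⟨g, hg⟩ : H ∗ FreeGroup Unit) =
      Monoid.Coprod.inr (FreeGroup.of ()) := h (by simp)
  have := congrArg Monoid.Coprod.snd this
  simp only [Monoid.Coprod.snd_apply_inl, Monoid.Coprod.snd_apply_inr] at this
  exact FreeGroup.of_ne_one () this.symm

/-- if `F = F₁ ∗ F₂` and `H₁ ≤ F₁`, `H₂ ≤ F₂` are finitely generated and
dependence-closed in `F₁` resp. `F₂`, then `H₁ ∗ H₂ = ⟨H₁, H₂⟩` is dependence-closed
in `F`. -/
theorem depClosed_free_product [Group F] [IsFreeGroup F] (F₁ F₂ : Subgroup F)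
    (hF : IsInternalFreeProduct F₁ F₂)
    (H₁ H₂ : Subgroup F) (hle₁ : H₁ ≤ F₁) (hle₂ : H₂ ≤ F₂)
    (hfg₁ : H₁.FG) (hfg₂ : H₂.FG)
    (hc₁ : Subgroup.closure {g : F | g ∈ F₁ ∧ Depends H₁ g} = H₁)
    (hc₂ : Subgroup.closure {g : F | g ∈ F₂ ∧ Depends H₂ g} = H₂) :
    DepSubgroup (H₁ ⊔ H₂) = H₁ ⊔ H₂ := by
  refine le_antisymm ((Subgroup.closure_le _).2 fun g hg => ?_)
    fun g hg => Subgroup.subset_closure (depends_of_mem hg)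
  have hd₁ : ∀ g ∈ F₁, g ∉ H₁ → Function.Injective (phi H₁ g) := fun g hg hgH => by
    by_contra h
    exact hgH (hc₁ ▸ Subgroup.subset_closure ⟨hg, h⟩)
  have hd₂ : ∀ g ∈ F₂, g ∉ H₂ → Function.Injective (phi H₂ g) := fun g hg hgH => by
    by_contra h
    exact hgH (hc₂ ▸ Subgroup.subset_closure ⟨hg, h⟩)
  obtain ⟨K, hK⟩ : ∃ K, K = H₁ ⊔ H₂ ⊔ Subgroup.zpowers g := ⟨_, rfl⟩
  have hHK : H₁ ⊔ H₂ ≤ K := hK ▸ le_sup_left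
  have hK₁ := hF.inf_eq_of_depends hle₁ hle₂ hfg₁ hfg₂ hd₁ hd₂ hK hg
  have hK₂ := hF.symm.inf_eq_of_depends hle₂ hle₁ hfg₂ hfg₁ hd₂ hd₁
    (hK.trans (by rw [sup_comm H₁ H₂])) (sup_comm H₁ H₂ ▸ hg)
  obtain ⟨r, hr₁, hr₂⟩ := hF.exists_extension K
    (Subgroup.inclusion (hK₁.le.trans (le_sup_left : H₁ ≤ H₁ ⊔ H₂)))
    (Subgroup.inclusion (hK₂.le.trans (le_sup_right : H₂ ≤ H₁ ⊔ H₂)))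
  refine mem_of_depends_of_retraction (hfg₁.sup hfg₂) hK r (fun h hk => Subtype.ext ?_) hg
  have hle : H₁ ⊔ H₂ ≤ (((H₁ ⊔ H₂).subtype.comp r).eqLocus K.subtype).map K.subtype := by
    refine sup_le (fun y hy => ?_) fun y hy => ?_
    · have hyK : y ∈ K ⊓ F₁ := ⟨hHK (Subgroup.mem_sup_left hy), hle₁ hy⟩
      exact ⟨⟨y, hyK.1⟩, congrArg Subtype.val (hr₁ y hyK), rfl⟩
    · have hyK : y ∈ K ⊓ F₂ := ⟨hHK (Subgroup.mem_sup_right hy), hle₂ hy⟩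
      exact ⟨⟨y, hyK.1⟩, congrArg Subtype.val (hr₂ y hyK), rfl⟩
  obtain ⟨k, hk', h'⟩ := hle h.2
  have : (⟨h, hk⟩ : K) = k := Subtype.ext h'.symm
  rw [this]
  exact hk'.trans h'
end

section
/- Let H be a finitely generated subgroup of a free group F. Then there exists a minimal m ≥ 0 (the dependence length of H) such that the dependence closure DepCl(H) = ∪_{i ≥ 0} Dep^i(H) equals Dep^m(H); in particular Dep^{m+1}(H) = Dep^m(H). Moreover, rank(DepCl(H)) ≤ rank(H). -/
open scoped Monoid.Coprod

variable {F : Type*}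

/-- Inclusion in one factor induces an injection of free products. -/
theorem Monoid.Coprod.map_id_injective {M M' N : Type*} [Group M] [Group M'] [Group N]
    {f : M →* M'} (hf : Function.Injective f) :
    Function.Injective (Monoid.Coprod.map f (MonoidHom.id N)) := by
  let S : Subgroup (M ∗ N) := (Monoid.Coprod.inl : M →* M ∗ N).range
  have hex (y : M ∗ N) : ∃ m : M, Monoid.Coprod.inl m = (y : (M ∗ N) ⧸ S).out⁻¹ * y := by
    obtain ⟨s, hs⟩ := QuotientGroup.mk_out_eq_mul S y
    obtain ⟨m, hm⟩ := s.2
    exact ⟨m⁻¹, by rw [hs, map_inv, hm]; group⟩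
  choose h hh using hex
  have hmk (y : M ∗ N) (m : M) : ((y * Monoid.Coprod.inl m : M ∗ N) : (M ∗ N) ⧸ S) = y :=
    QuotientGroup.mk_mul_of_mem y ⟨m, rfl⟩
  have hmul (y : M ∗ N) (m : M) : h (y * Monoid.Coprod.inl m) = h y * m := by
    apply Monoid.Coprod.inl_injective (N := N)
    rw [hh, map_mul, hh, hmk, mul_assoc]
  let j : M ∗ N ↪ ((M ∗ N) ⧸ S) × M' :=
    { toFun := fun y => (y, f (h y))
      inj' := by
        intro y z hyz
        simp only [Prod.mk.injEq] at hyz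
        have h1 := hh y
        rw [hf hyz.2, hh z, hyz.1] at h1
        exact (mul_left_cancel h1).symm }
  let a : M' →* Equiv.Perm (((M ∗ N) ⧸ S) × M') :=
    { toFun := fun k => Equiv.prodCongr (Equiv.refl _) (Equiv.mulRight k⁻¹)
      map_one' := by ext x <;> simp
      map_mul' := by intro k l; ext x <;> simp [mul_assoc] }
  let r : (M ∗ N) →* Equiv.Perm (M ∗ N) :=
    { toFun := fun k => Equiv.mulRight k⁻¹
      map_one' := by ext x; simp
      map_mul' := by intro k l; ext x; simp [mul_assoc] }
  let Φ : M' ∗ N →* Equiv.Perm (((M ∗ N) ⧸ S) × M') :=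
    Monoid.Coprod.lift a
      ((Equiv.Perm.viaEmbeddingHom j).comp (r.comp Monoid.Coprod.inr))
  have key (v : M ∗ N) : ∀ y, Φ (Monoid.Coprod.map f (MonoidHom.id N) v) (j y) = j (y * v⁻¹) := by
    induction v using Monoid.Coprod.induction_on with
    | inl m =>
      intro y
      have : (y * (Monoid.Coprod.inl m : M ∗ N)⁻¹) = y * Monoid.Coprod.inl m⁻¹ := by simp
      rw [this]
      have hj : j (y * Monoid.Coprod.inl m⁻¹) = ((y : (M ∗ N) ⧸ S), f (h y) * (f m)⁻¹) := by
        rw [← map_inv, ← map_mul, ← hmul, ← hmk y m⁻¹]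
        rfl
      rw [hj]
      simp only [Φ, Monoid.Coprod.map_apply_inl, Monoid.Coprod.lift_apply_inl]
      rfl
    | inr n =>
      intro y
      simp [Φ, Equiv.Perm.viaEmbeddingHom_apply, Equiv.Perm.viaEmbedding_apply, r]
    | mul u v hu hv =>
      intro y
      rw [map_mul, map_mul, Equiv.Perm.mul_apply, hv, hu, mul_inv_rev, mul_assoc]
  rw [injective_iff_map_eq_one]
  intro v hv
  have := key v 1
  rw [hv, map_one, Equiv.Perm.one_apply, one_mul] at this
  exact inv_eq_one.mp (j.injective this).symm

theorem depSet_mono [Group F] {H K : Subgroup F} (h : H ≤ K) : depSet H ⊆ depSet K := by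
  intro g hg hK
  apply hg
  have : phi H g =
      (phi K g).comp (Monoid.Coprod.map (Subgroup.inclusion h) (MonoidHom.id _)) := by
    ext <;> simp [phi]
  rw [this]
  exact hK.comp (Monoid.Coprod.map_id_injective (Subgroup.inclusion_injective h))

universe u in
/-- Free groups are residually finite. -/
theorem FreeGroup.exists_perm_lift_ne_one {α : Type u} {w : FreeGroup α} (hw : w ≠ 1) :
    ∃ (B : Type u) (_ : Finite B) (f : α → Equiv.Perm B), FreeGroup.lift f w ≠ 1 := by
  classical
  obtain ⟨L, rfl⟩ := Quot.exists_rep w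
  let B : Set (FreeGroup α) := {g | ∃ L', L' <:+ L ∧ g = FreeGroup.mk L'}
  have hB : B.Finite := by
    refine (L.tails.toFinset.finite_toSet.image FreeGroup.mk).subset ?_
    rintro _ ⟨L', h, rfl⟩
    exact ⟨L', by simpa using h, rfl⟩
  have : Fintype B := hB.fintype
  let e (a : α) : {x : B // FreeGroup.of a * x ∈ B} ≃ {x : B // (FreeGroup.of a)⁻¹ * x ∈ B} :=
    { toFun := fun x => ⟨⟨FreeGroup.of a * x.1, x.2⟩, by simp⟩
      invFun := fun x => ⟨⟨(FreeGroup.of a)⁻¹ * x.1, x.2⟩, by simp⟩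
      left_inv := fun x => by ext; simp
      right_inv := fun x => by ext; simp }
  let f (a : α) : Equiv.Perm B := (e a).extendSubtype
  have hf (a : α) (x y : B) (h : FreeGroup.of a * x = (y : FreeGroup α)) : f a x = y := by
    have hx : FreeGroup.of a * (x : FreeGroup α) ∈ B := h ▸ y.2
    ext1
    rw [← h]
    simp only [f]
    rw [Equiv.extendSubtype_apply_of_mem (e a) x hx]
    rfl
  have h1 : (1 : FreeGroup α) ∈ B := ⟨[], List.nil_suffix, rfl⟩
  have key (L' : List (α × Bool)) (h : L' <:+ L) :
      FreeGroup.lift f (FreeGroup.mk L') ⟨1, h1⟩ = ⟨FreeGroup.mk L', L', h, rfl⟩ := by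
    induction L' with
    | nil => rfl
    | cons p t ih =>
      obtain ⟨a, b⟩ := p
      have ht : t <:+ L := (List.suffix_cons _ _).trans h
      have hmk : (FreeGroup.mk ((a, b) :: t)) = FreeGroup.mk [(a, b)] * FreeGroup.mk t := by
        simp
      simp only [hmk, _root_.map_mul, Equiv.Perm.mul_apply, ih ht]
      cases b with
      | true =>
        have : FreeGroup.lift f (FreeGroup.mk [(a, true)]) = f a := by simp
        rw [this]
        exact hf a _ _ rfl
      | false =>
        have : FreeGroup.lift f (FreeGroup.mk [(a, false)]) = (f a)⁻¹ := by simp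
        rw [this, Equiv.Perm.inv_eq_iff_eq]
        refine (hf a _ _ ?_).symm
        rw [← mul_assoc]
        simp only [FreeGroup.of, FreeGroup.mul_mk, List.singleton_append]
        exact Quot.sound (FreeGroup.Red.Step.not (L₁ := []) (b := true))
  refine ⟨B, inferInstance, f, fun h => hw ?_⟩
  have := key L (List.suffix_refl L)
  rw [show FreeGroup.lift f (FreeGroup.mk L) = 1 from h] at this
  exact (congrArg Subtype.val this).symm

/-- Free groups of finite rank are Hopfian. -/
theorem FreeGroup.injective_of_surjective {α : Type*} [Finite α]
    {ψ : FreeGroup α →* FreeGroup α} (hψ : Function.Surjective ψ) : Function.Injective ψ := by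
  rw [injective_iff_map_eq_one]
  intro w hw
  by_contra hne
  obtain ⟨B, hB, f, hf⟩ := FreeGroup.exists_perm_lift_ne_one hne
  let T : (α → Equiv.Perm B) → (α → Equiv.Perm B) :=
    fun c a => FreeGroup.lift c (ψ (FreeGroup.of a))
  have hT (c : α → Equiv.Perm B) : FreeGroup.lift (T c) = (FreeGroup.lift c).comp ψ := by
    ext1 a
    simp [T]
  have hinj : Function.Injective T := by
    intro c d hcd
    have : (FreeGroup.lift c).comp ψ = (FreeGroup.lift d).comp ψ := by rw [← hT, ← hT, hcd]
    exact FreeGroup.lift.injective ((MonoidHom.cancel_right hψ).mp this)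
  obtain ⟨c, rfl⟩ := Finite.surjective_of_injective hinj f
  exact hf (by rw [hT, MonoidHom.comp_apply, hw, _root_.map_one])

theorem FreeGroupBasis.finite_card_le {ι K L : Type*} [Group K] [Group L]
    (b : FreeGroupBasis ι L) {f : K →* L} (hf : Function.Surjective f) {S : Set K}
    (hS : S.Finite) (hcl : Subgroup.closure S = ⊤) : Finite ι ∧ Nat.card ι ≤ S.ncard := by
  have := hS.to_subtype
  let T : (ι → Multiplicative (ZMod 2)) → (S → Multiplicative (ZMod 2)) :=
    fun c s => b.lift c (f s)
  have hinj : Function.Injective T := by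
    intro c d hcd
    have : (b.lift c).comp f = (b.lift d).comp f :=
      MonoidHom.eq_of_eqOn_dense hcl fun s hs => congrFun hcd ⟨s, hs⟩
    exact b.lift.injective ((MonoidHom.cancel_right hf).mp this)
  have hfin : Finite (ι → Multiplicative (ZMod 2)) := Finite.of_injective T hinj
  have hι : Finite ι := by
    classical
    refine Finite.of_injective
      (fun i : ι => (Pi.mulSingle i (Multiplicative.ofAdd 1) : ι → Multiplicative (ZMod 2))) ?_
    intro i j hij
    by_contra hne
    have := congrFun hij i
    simp [Pi.mulSingle_eq_of_ne hne] at this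
  refine ⟨hι, ?_⟩
  have := Nat.card_le_card_of_injective T hinj
  simp only [Nat.card_fun] at this
  rw [Nat.card_coe_set_eq] at this
  have h2 : Nat.card (Multiplicative (ZMod 2)) = 2 := by simp
  rw [h2] at this
  exact (Nat.pow_le_pow_iff_right one_lt_two).mp this

/-- `H` is generated by at most `r` elements. -/
def GeneratedByAtMost [Group F] (H : Subgroup F) (r : ℕ) : Prop :=
  ∃ S : Set F, S.Finite ∧ S.ncard ≤ r ∧ Subgroup.closure S = H

theorem GeneratedByAtMost.finite_card_le [Group F] {H : Subgroup F} {r : ℕ}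
    (hH : GeneratedByAtMost H r) {ι L : Type*} [Group L] (b : FreeGroupBasis ι L)
    {f : H →* L} (hf : Function.Surjective f) : Finite ι ∧ Nat.card ι ≤ r := by
  obtain ⟨S, hS, hr, rfl⟩ := hH
  have hinj : Function.Injective ((↑) : Subgroup.closure S → F) := Subtype.coe_injective
  obtain ⟨h1, h2⟩ := b.finite_card_le hf (hS.preimage hinj.injOn)
    (Subgroup.closure_closure_coe_preimage (k := S))
  refine ⟨h1, h2.trans (le_trans ?_ hr)⟩
  rw [← Set.ncard_image_of_injective _ hinj]
  exact Set.ncard_le_ncard (Set.image_preimage_subset _ _) hS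

theorem FreeGroupBasis.closure_range {ι G : Type*} [Group G] (b : FreeGroupBasis ι G) :
    Subgroup.closure (Set.range b) = ⊤ := by
  rw [← FreeGroup.lift_surjective_iff_closure_range_eq_top]
  have : FreeGroup.lift b = b.repr.symm.toMonoidHom := by
    ext i
    simp
    rfl
  rw [this]
  exact b.repr.symm.surjective

theorem FreeGroupBasis.generatedByAtMost [Group F] {H : Subgroup F} {ι : Type*}
    (b : FreeGroupBasis ι H) [Finite ι] {r : ℕ} (hr : Nat.card ι ≤ r) :
    GeneratedByAtMost H r := by
  refine ⟨Set.range fun i => (b i : F), Set.finite_range _, ?_, ?_⟩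
  · refine le_trans ?_ hr
    rw [← Set.image_univ]
    exact (Set.ncard_image_le Set.finite_univ).trans (Set.ncard_univ ι).le
  · have := congrArg (Subgroup.map H.subtype) b.closure_range
    rw [MonoidHom.map_closure, ← Set.range_comp] at this
    simpa [Function.comp_def, ← MonoidHom.range_eq_map] using this

/-- A subgroup of a free group is generated by at most `r` elements if this holds locally. -/
theorem generatedByAtMost_of_local [Group F] [IsFreeGroup F] {D : Subgroup F} {r : ℕ}
    (h : ∀ S : Set F, S.Finite → S ⊆ D → ∃ K ≤ D, S ⊆ K ∧ GeneratedByAtMost K r) :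
    GeneratedByAtMost D r := by
  classical
  obtain ⟨ι, ⟨b⟩⟩ := IsFreeGroup.nonempty_basis (G := D)
  have hcard (t : Finset ι) : t.card ≤ r := by
    obtain ⟨K, hKD, hSK, hK⟩ := h ((fun i => (b i : F)) '' t) (t.finite_toSet.image _)
      (by rintro _ ⟨i, -, rfl⟩; exact (b i).2)
    let p : D →* FreeGroup t := b.lift fun i => if hi : i ∈ t then FreeGroup.of ⟨i, hi⟩ else 1
    have hp (i : t) : p (b i) = FreeGroup.of i := by
      simp only [p, FreeGroupBasis.lift_apply_apply]
      simp
    have hsurj : Function.Surjective (p.comp (Subgroup.inclusion hKD)) := by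
      rw [← MonoidHom.range_eq_top, eq_top_iff, ← FreeGroup.closure_range_of,
        Subgroup.closure_le]
      rintro _ ⟨i, rfl⟩
      exact ⟨⟨b i, hSK ⟨i, i.2, rfl⟩⟩, hp i⟩
    simpa using (hK.finite_card_le (FreeGroupBasis.ofFreeGroup t) hsurj).2
  have : Finite ι := by
    by_contra hinf
    rw [not_finite_iff_infinite] at hinf
    obtain ⟨t, ht⟩ := Infinite.exists_subset_card_eq ι (r + 1)
    have := hcard t
    omega
  have := Fintype.ofFinite ι
  exact b.generatedByAtMost (by simpa [Nat.card_eq_fintype_card] using hcard Finset.univ)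

/-- Adjoining an element depending on `H` does not increase the rank. -/
theorem GeneratedByAtMost.sup_closure_singleton [Group F] [IsFreeGroup F] {H : Subgroup F}
    {r : ℕ} (hH : GeneratedByAtMost H r) {g : F} (hg : g ∈ depSet H) :
    GeneratedByAtMost (H ⊔ Subgroup.closure {g}) r := by
  set K := H ⊔ Subgroup.closure {g} with hK
  obtain ⟨ι, ⟨b⟩⟩ := IsFreeGroup.nonempty_basis (G := H)
  obtain ⟨κ, ⟨c⟩⟩ := IsFreeGroup.nonempty_basis (G := K)
  obtain ⟨_, hι⟩ := hH.finite_card_le b (f := MonoidHom.id H) Function.surjective_id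
  have hgK : g ∈ K := hK ▸ Subgroup.mem_sup_right (Subgroup.subset_closure rfl)
  let x : Option ι → K := fun o => o.elim ⟨g, hgK⟩ fun i => Subgroup.inclusion le_sup_left (b i)
  have hx : Function.Surjective (FreeGroup.lift x) := by
    have hb : (FreeGroup.lift x).comp (b.lift fun i => FreeGroup.of (some i)) =
        Subgroup.inclusion (le_sup_left : H ≤ K) := by
      apply b.ext_hom
      intro i
      simp [x]
    have hle : K ≤ (FreeGroup.lift x).range.map K.subtype := by
      refine sup_le (fun y hy => ?_) ((Subgroup.closure_le _).mpr ?_)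
      · exact ⟨_, ⟨_, rfl⟩, congrArg K.subtype (DFunLike.congr_fun hb ⟨y, hy⟩)⟩
      · rintro _ rfl
        exact ⟨_, ⟨FreeGroup.of none, rfl⟩, by simp [x]⟩
    intro y
    obtain ⟨z, hz, hzy⟩ := hle y.2
    rwa [Subtype.ext hzy] at hz
  have hfin := c.finite_card_le hx (Set.finite_range FreeGroup.of) (FreeGroup.closure_range_of _)
  have hκ : Finite κ := hfin.1
  have hcard : Nat.card κ ≤ Nat.card ι + 1 := by
    refine hfin.2.trans ?_
    rw [← Set.image_univ]
    refine (Set.ncard_image_le Set.finite_univ).trans ?_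
    rw [Set.ncard_univ, Finite.card_option]
  rcases hcard.lt_or_eq with hlt | heq
  · exact c.generatedByAtMost (by omega)
  exfalso
  apply hg
  obtain ⟨e⟩ : Nonempty (κ ≃ Option ι) := Finite.card_eq.mp (by rw [heq, Finite.card_option])
  have hxinj : Function.Injective (FreeGroup.lift x) := by
    let c' := c.reindex e
    have := FreeGroup.injective_of_surjective
      (ψ := c'.repr.toMonoidHom.comp (FreeGroup.lift x)) (c'.repr.surjective.comp hx)
    exact Function.Injective.of_comp (f := c'.repr) this
  let θ : ↥H ∗ FreeGroup Unit →* FreeGroup (Option ι) :=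
    Monoid.Coprod.lift (b.lift fun i => FreeGroup.of (some i))
      (FreeGroup.lift fun _ => FreeGroup.of none)
  let θ' : FreeGroup (Option ι) →* ↥H ∗ FreeGroup Unit :=
    FreeGroup.lift fun o => o.elim (Monoid.Coprod.inr (FreeGroup.of ()))
      fun i => Monoid.Coprod.inl (b i)
  have hθ : θ'.comp θ = MonoidHom.id _ := by
    apply Monoid.Coprod.hom_ext
    · apply b.ext_hom
      intro i
      simp [θ, θ']
    · ext
      simp [θ, θ']
  have hphi : phi H g = K.subtype.comp ((FreeGroup.lift x).comp θ) := by
    apply Monoid.Coprod.hom_ext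
    · apply b.ext_hom
      intro i
      simp [θ, phi, x]
    · ext
      simp [θ, phi, x]
  rw [hphi]
  exact K.subtype_injective.comp
    (hxinj.comp (Function.LeftInverse.injective (g := θ') fun v => DFunLike.congr_fun hθ v))

theorem le_depSubgroup [Group F] (H : Subgroup F) : H ≤ DepSubgroup H := by
  refine fun h hh => Subgroup.subset_closure fun hinj => ?_
  have : (Monoid.Coprod.inl ⟨h, hh⟩ : ↥H ∗ FreeGroup Unit) =
      Monoid.Coprod.inr (FreeGroup.of ()) := hinj (by simp [phi])
  have := congrArg Monoid.Coprod.snd this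
  simp at this

theorem GeneratedByAtMost.sup_closure [Group F] [IsFreeGroup F] {H : Subgroup F}
    {r : ℕ} (hH : GeneratedByAtMost H r) {T : Set F} (hT : T.Finite) (hdep : T ⊆ depSet H) :
    GeneratedByAtMost (H ⊔ Subgroup.closure T) r := by
  induction T, hT using Set.Finite.induction_on with
  | empty => simpa using hH
  | @insert g T _ _ ih =>
    rw [Set.insert_eq, Set.union_comm, Subgroup.closure_union, ← sup_assoc]
    exact (ih ((Set.subset_insert _ _).trans hdep)).sup_closure_singleton
      (depSet_mono le_sup_left (hdep (Set.mem_insert _ _)))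

theorem exists_finite_subset_closure [Group F] {A S : Set F} (hS : S.Finite)
    (hSA : S ⊆ Subgroup.closure A) : ∃ T ⊆ A, T.Finite ∧ S ⊆ Subgroup.closure T := by
  have hone (s : F) (hs : s ∈ Subgroup.closure A) :
      ∃ T ⊆ A, T.Finite ∧ s ∈ Subgroup.closure T := by
    induction hs using Subgroup.closure_induction with
    | mem x hx =>
      exact ⟨{x}, by simpa using hx, Set.finite_singleton x, Subgroup.subset_closure rfl⟩
    | one => exact ⟨∅, Set.empty_subset _, Set.finite_empty, one_mem _⟩
    | mul x y _ _ hx hy =>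
      obtain ⟨T, hTA, hT, hxT⟩ := hx
      obtain ⟨U, hUA, hU, hyU⟩ := hy
      exact ⟨T ∪ U, Set.union_subset hTA hUA, hT.union hU,
        mul_mem (Subgroup.closure_mono Set.subset_union_left hxT)
          (Subgroup.closure_mono Set.subset_union_right hyU)⟩
    | inv x _ hx =>
      obtain ⟨T, hTA, hT, hxT⟩ := hx
      exact ⟨T, hTA, hT, inv_mem hxT⟩
  choose! T hTA hT hmem using hone
  refine ⟨⋃ s ∈ S, T s, Set.iUnion₂_subset fun s hs => hTA s (hSA hs),
    hS.biUnion fun s hs => hT s (hSA hs), fun s hs => ?_⟩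
  exact Subgroup.closure_mono (Set.subset_biUnion_of_mem (u := T) hs) (hmem s (hSA hs))

theorem GeneratedByAtMost.depSubgroup [Group F] [IsFreeGroup F] {H : Subgroup F} {r : ℕ}
    (hH : GeneratedByAtMost H r) : GeneratedByAtMost (DepSubgroup H) r := by
  refine generatedByAtMost_of_local fun S hS hSD => ?_
  obtain ⟨T, hTA, hT, hST⟩ := exists_finite_subset_closure hS hSD
  exact ⟨H ⊔ Subgroup.closure T, sup_le (le_depSubgroup H) (Subgroup.closure_mono hTA),
    fun s hs => (le_sup_right : Subgroup.closure T ≤ _) (hST hs), hH.sup_closure hT hTA⟩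

theorem monotone_iterate_depSubgroup [Group F] (H : Subgroup F) :
    Monotone fun i => DepSubgroup^[i] H :=
  monotone_nat_of_le_succ fun i => by
    rw [Function.iterate_succ_apply']
    exact le_depSubgroup _

theorem exists_subset_of_subset_iSup [Group F] {D : ℕ → Subgroup F} (hD : Monotone D)
    {S : Set F} (hS : S.Finite) (h : S ⊆ (⨆ i, D i : Subgroup F)) : ∃ i, S ⊆ D i := by
  induction S, hS using Set.Finite.induction_on with
  | empty => exact ⟨0, Set.empty_subset _⟩
  | @insert g T _ _ ih =>
    obtain ⟨i, hi⟩ := ih ((Set.subset_insert _ _).trans h)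
    obtain ⟨j, hj⟩ :=
      (Subgroup.mem_iSup_of_directed hD.directed_le).mp (h (Set.mem_insert _ _))
    refine ⟨max i j, Set.insert_subset (hD (le_max_right i j) hj) ?_⟩
    exact hi.trans (hD (le_max_left i j))

theorem GeneratedByAtMost.iSup [Group F] [IsFreeGroup F] {D : ℕ → Subgroup F} {r : ℕ}
    (hD : Monotone D) (h : ∀ i, GeneratedByAtMost (D i) r) :
    GeneratedByAtMost (⨆ i, D i) r :=
  generatedByAtMost_of_local fun S hS hSD => by
    obtain ⟨i, hi⟩ := exists_subset_of_subset_iSup hD hS hSD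
    exact ⟨D i, le_iSup D i, hi, h i⟩

theorem rk_le_of_generatedByAtMost [Group F] {H : Subgroup F} {r : ℕ}
    (h : GeneratedByAtMost H r) : rk H ≤ r := by
  obtain ⟨S, hS, hr, hcl⟩ := h
  refine (ciInf_le' _ ⟨S, hcl⟩).trans ?_
  rw [← Set.cast_ncard hS]
  exact_mod_cast hr

theorem exists_generatedByAtMost_eq_rk [Group F] {H : Subgroup F} (hH : H.FG) :
    ∃ r : ℕ, GeneratedByAtMost H r ∧ rk H = r := by
  obtain ⟨S, hS⟩ := hH
  have hne : Nonempty {S : Set F // Subgroup.closure S = H} := ⟨⟨S, hS⟩⟩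
  obtain ⟨T, hT⟩ := ciInf_mem fun T : {S : Set F // Subgroup.closure S = H} => Cardinal.mk T.1
  replace hT : Cardinal.mk T.1 = rk H := hT
  have hfin : T.1.Finite := by
    rw [← Cardinal.lt_aleph0_iff_set_finite, hT]
    exact (ciInf_le' _ ⟨(S : Set F), hS⟩).trans_lt
      (Cardinal.lt_aleph0_iff_set_finite.mpr S.finite_toSet)
  refine ⟨T.1.ncard, ⟨T.1, hfin, le_rfl, T.2⟩, ?_⟩
  rw [Set.cast_ncard hfin]
  exact hT.symm

/-- for finitely generated `H` there is a minimal `m` (the dependence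
length) with `DepCl H = ⋃ᵢ Depⁱ H = Dep^m H`; in particular `Dep^(m+1) H = Dep^m H`.
Moreover `rank (DepCl H) ≤ rank H`. -/
theorem dependence_closure_stabilizes [Group F] [IsFreeGroup F] (H : Subgroup F)
    (hH : H.FG) :
    ∃ m : ℕ,
      (⨆ i, DepSubgroup^[i] H) = DepSubgroup^[m] H ∧
      (∀ k, (⨆ i, DepSubgroup^[i] H) = DepSubgroup^[k] H → m ≤ k) ∧
      DepSubgroup^[m + 1] H = DepSubgroup^[m] H ∧
      rk (⨆ i, DepSubgroup^[i] H) ≤ rk H := by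
  classical
  obtain ⟨r, hr, hrk⟩ := exists_generatedByAtMost_eq_rk hH
  have hmono := monotone_iterate_depSubgroup H
  have hgen (i : ℕ) : GeneratedByAtMost (DepSubgroup^[i] H) r := by
    induction i with
    | zero => exact hr
    | succ i ih =>
      rw [Function.iterate_succ_apply']
      exact ih.depSubgroup
  have hcl := GeneratedByAtMost.iSup hmono hgen
  have hex : ∃ m, (⨆ i, DepSubgroup^[i] H) = DepSubgroup^[m] H := by
    obtain ⟨S, hS, -, hSD⟩ := hcl
    obtain ⟨m, hm⟩ := exists_subset_of_subset_iSup hmono hS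
      (hSD ▸ Subgroup.subset_closure)
    refine ⟨m, le_antisymm ?_ (le_iSup (fun i => DepSubgroup^[i] H) m)⟩
    rw [← hSD]
    exact (Subgroup.closure_le _).mpr hm
  refine ⟨Nat.find hex, Nat.find_spec hex, fun k hk => Nat.find_min' hex hk, ?_, ?_⟩
  · refine le_antisymm ?_ (hmono (Nat.le_succ _))
    rw [← Nat.find_spec hex]
    exact le_iSup (fun i => DepSubgroup^[i] H) _
  · rw [hrk]
    exact rk_le_of_generatedByAtMost hcl
end

section
/- Let H be a finitely generated subgroup of rank r of a free group F and let g ∈ F be an element that depends on H. Then the kernel of φ_g : H ∗ ⟨x⟩ → F (the normal subgroup Eqn(H, g) of all equations over H satisfied by g) is the normal closure in H ∗ ⟨x⟩ of a finite set of r + 1 − s elements, where s = rank(⟨H, g⟩); in particular, ker φ_g is normally generated by at most r + 1 elements. -/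
open scoped Monoid.Coprod

variable {F : Type*}

namespace List

variable {α : Type*} [DecidableEq α]

/-- The length of the longest common prefix of two lists. -/
def commonPrefixLength : List α → List α → ℕ
  | a :: l, b :: m => if a = b then commonPrefixLength l m + 1 else 0
  | _, _ => 0

theorem commonPrefixLength_comm (l m : List α) :
    commonPrefixLength l m = commonPrefixLength m l := by
  induction l generalizing m with
  | nil => cases m <;> simp [commonPrefixLength]
  | cons a l ih =>
    cases m with
    | nil => simp [commonPrefixLength]
    | cons b m => simp [commonPrefixLength, ih m, eq_comm]

theorem min_commonPrefixLength_le (l m n : List α) :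
    min (commonPrefixLength l m) (commonPrefixLength m n) ≤ commonPrefixLength l n := by
  induction l generalizing m n with
  | nil => simp [commonPrefixLength]
  | cons a l ih =>
    cases m with
    | nil => simp [commonPrefixLength]
    | cons b m =>
      cases n with
      | nil => simp [commonPrefixLength]
      | cons c n =>
        have := ih m n
        simp only [commonPrefixLength]
        grind

theorem exists_eq_append_commonPrefixLength (l m : List α) :
    ∃ p a b, l = p ++ a ∧ m = p ++ b ∧ p.length = commonPrefixLength l m ∧
      ∀ x ∈ a.head?, ∀ y ∈ b.head?, x ≠ y := by
  induction l generalizing m with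
  | nil => exact ⟨[], [], m, by simp [commonPrefixLength]⟩
  | cons c l ih =>
    cases m with
    | nil => exact ⟨[], c :: l, [], by simp [commonPrefixLength]⟩
    | cons d m =>
      by_cases h : c = d
      · obtain ⟨p, a, b, hl, hm, hp, hab⟩ := ih m
        exact ⟨c :: p, a, b, by simp [hl], by simp [hm, h], by simp [hp, h, commonPrefixLength],
          hab⟩
      · exact ⟨[], c :: l, d :: m, by simp [commonPrefixLength, h]⟩

end List

namespace FreeGroup

variable {α : Type*}

theorem isReduced_invRev {l : List (α × Bool)} (h : IsReduced l) : IsReduced (invRev l) := by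
  classical
  rw [isReduced_iff_reduce_eq, reduce_invRev, h.reduce_eq]

section WordCode

variable [Fintype α]

/-- A numerical code of a word, injective on words of a given length. -/
noncomputable def wordCode (l : List (α × Bool)) : ℕ :=
  Nat.ofDigits (Fintype.card (α × Bool) + 2) (l.map fun x => (Fintype.equivFin (α × Bool) x : ℕ))

theorem wordCode_append_lt_iff {p q t : List (α × Bool)} (hpq : p.length = q.length) :
    wordCode (p ++ t) < wordCode (q ++ t) ↔ wordCode p < wordCode q := by
  simp [wordCode, Nat.ofDigits_append, hpq]

theorem eq_of_wordCode_eq {p q : List (α × Bool)} (hpq : p.length = q.length)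
    (h : wordCode p = wordCode q) : p = q := by
  have := Nat.ofDigits_inj_of_len_eq (by omega) (by simpa using hpq)
    (by simp only [List.mem_map, forall_exists_index, and_imp]; rintro _ x - rfl; omega)
    (by simp only [List.mem_map, forall_exists_index, and_imp]; rintro _ x - rfl; omega) h
  refine List.map_injective_iff.2 ?_ this
  exact Fin.val_injective.comp (Fintype.equivFin (α × Bool)).injective

end WordCode

variable [DecidableEq α]

/-- The Gromov product of two elements of a free group with respect to the identity, i.e. the
length of the longest common prefix of their reduced words. -/
def gromovProduct (x y : FreeGroup α) : ℕ :=
  x.toWord.commonPrefixLength y.toWord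

theorem gromovProduct_comm (x y : FreeGroup α) : gromovProduct x y = gromovProduct y x :=
  List.commonPrefixLength_comm _ _

theorem min_gromovProduct_le (x y z : FreeGroup α) :
    min (gromovProduct x y) (gromovProduct y z) ≤ gromovProduct x z :=
  List.min_commonPrefixLength_le _ _ _

theorem exists_toWord_inv_mul_eq (x y : FreeGroup α) :
    ∃ p a b, x.toWord = p ++ a ∧ y.toWord = p ++ b ∧ p.length = gromovProduct x y ∧
      (x⁻¹ * y).toWord = invRev a ++ b := by
  obtain ⟨p, a, b, hx, hy, hp, hab⟩ :=
    List.exists_eq_append_commonPrefixLength x.toWord y.toWord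
  refine ⟨p, a, b, hx, hy, hp, ?_⟩
  have ha : IsReduced a := isReduced_toWord.infix (hx ▸ (List.suffix_append p a).isInfix)
  have hb : IsReduced b := isReduced_toWord.infix (hy ▸ (List.suffix_append p b).isInfix)
  have hred : IsReduced (invRev a ++ b) := by
    refine List.IsChain.append (isReduced_invRev ha) hb ?_
    intro u hu v hv huv
    cases a with
    | nil => simp [invRev] at hu
    | cons c a =>
      have hc := hab c (by simp) v hv
      simp only [invRev, List.map_cons, List.reverse_cons, List.getLast?_append,
        List.getLast?_singleton, Option.some_or, Option.mem_def, Option.some.injEq] at hu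
      subst hu
      rcases c with ⟨c, s⟩
      rcases v with ⟨v, t⟩
      cases s <;> cases t <;> simp_all
  have hmk : x⁻¹ * y = mk (invRev a ++ b) := by
    rw [← mk_toWord (x := x), ← mk_toWord (x := y), hx, hy, ← mul_mk, ← mul_mk, ← mul_mk,
      ← inv_mk]
    group
  rw [hmk, toWord_mk, hred.reduce_eq]

theorem norm_inv_mul_add (x y : FreeGroup α) :
    norm (x⁻¹ * y) + 2 * gromovProduct x y = norm x + norm y := by
  obtain ⟨p, a, b, hx, hy, hp, h⟩ := exists_toWord_inv_mul_eq x y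
  simp only [norm, hx, hy, h, ← hp, List.length_append, invRev_length]
  ring

theorem norm_mul_add (x y : FreeGroup α) :
    norm (x * y) + 2 * gromovProduct x⁻¹ y = norm x + norm y := by
  simpa using norm_inv_mul_add x⁻¹ y

theorem gromovProduct_self_mul_add (x y : FreeGroup α) :
    gromovProduct x (x * y) + gromovProduct x⁻¹ y = norm x := by
  have h₁ := norm_inv_mul_add x (x * y)
  have h₂ := norm_mul_add x y
  rw [inv_mul_cancel_left] at h₁
  omega

theorem gromovProduct_one_right (x : FreeGroup α) : gromovProduct x 1 = 0 := by
  have := norm_inv_mul_add x 1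
  simp at this
  exact this

/-- The initial half (rounded down) of the reduced word of an element of a free group. -/
def initialHalf (x : FreeGroup α) : List (α × Bool) :=
  x.toWord.take (norm x / 2)

theorem eq_one_of_initialHalf_eq {x : FreeGroup α} (hx : Even (norm x))
    (h : initialHalf x = initialHalf x⁻¹) : x = 1 := by
  obtain ⟨k, hk⟩ := hx
  have hlen : x.toWord.length = k + k := hk
  have hk2 : norm x / 2 = k := by omega
  have hdrop : x.toWord.drop k = invRev (x.toWord.take k) := by
    rw [initialHalf, initialHalf, norm_inv_eq, hk2, toWord_inv] at h
    conv_rhs => rw [h]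
    simp [invRev, List.take_reverse, hlen, Function.comp_def]
  rw [← mk_toWord (x := x), ← List.take_append_drop k x.toWord, hdrop, ← mul_mk, ← inv_mk,
    mul_inv_cancel]

theorem two_mul_gromovProduct_inv_self_lt {x : FreeGroup α} (hx : x ≠ 1) :
    2 * gromovProduct x⁻¹ x < norm x := by
  by_contra! hle
  obtain ⟨p, a, b, hx', hx'', hp, -⟩ := exists_toWord_inv_mul_eq x⁻¹ x
  rcases Nat.even_or_odd (norm x) with he | ho
  · refine hx (eq_one_of_initialHalf_eq he ?_)
    rw [initialHalf, initialHalf, norm_inv_eq, hx', hx'',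
      List.take_append_of_le_length (by omega), List.take_append_of_le_length (by omega)]
  · obtain ⟨k, hk⟩ := ho
    have hlen : x.toWord.length = 2 * k + 1 := hk
    have h : x.toWord[k]? = (x⁻¹).toWord[k]? := by
      rw [hx', hx'', List.getElem?_append_left (by omega), List.getElem?_append_left (by omega)]
    rw [toWord_inv, invRev, List.getElem?_reverse (by simp; omega), List.length_map, hlen,
      show 2 * k + 1 - 1 - k = k by omega, List.getElem?_map,
      List.getElem?_eq_getElem (by omega)] at h
    have := congrArg Prod.snd (Option.some.inj h)
    simp at this

section Weight

variable [Fintype α]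

/-- The sum of the codes of the initial halves of an element and of its inverse. -/
noncomputable def halfCode (x : FreeGroup α) : ℕ :=
  wordCode (initialHalf x) + wordCode (initialHalf x⁻¹)

theorem halfCode_inv (x : FreeGroup α) : halfCode x⁻¹ = halfCode x := by
  simp [halfCode, add_comm]

theorem halfCode_mul_lt {x y : FreeGroup α} (hxy : 2 * gromovProduct x⁻¹ y = norm x)
    (hle : norm x ≤ norm y) (hlt : wordCode (initialHalf x) < wordCode (initialHalf x⁻¹)) :
    halfCode (x * y) < halfCode y := by
  obtain ⟨q, a, t, hx, hy, hq, hmul⟩ := exists_toWord_inv_mul_eq x⁻¹ y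
  rw [inv_inv] at hmul
  have hnx : norm x = q.length + a.length := by
    rw [← norm_inv_eq, norm, hx, List.length_append]
  have hny : norm y = q.length + t.length := by rw [norm, hy, List.length_append]
  have hnm : norm (x * y) = a.length + t.length := by
    rw [norm, hmul, List.length_append, invRev_length]
  have haq : a.length = q.length := by omega
  have hx' : x.toWord = invRev a ++ invRev q := by
    rw [← inv_inv x, toWord_inv, hx, invRev_append]
  have h₁ : initialHalf x = invRev a := by
    rw [initialHalf, hx', show norm x / 2 = (invRev a).length by rw [invRev_length]; omega,
      List.take_left]
  have h₂ : initialHalf x⁻¹ = q := by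
    rw [initialHalf, hx, norm_inv_eq, show norm x / 2 = q.length by omega, List.take_left]
  have h₃ : initialHalf (x * y) = invRev a ++ t.take (norm y / 2 - q.length) := by
    rw [initialHalf, hmul, List.take_append, invRev_length, List.take_of_length_le
      (by rw [invRev_length]; omega)]
    congr 2
    omega
  have h₄ : initialHalf y = q ++ t.take (norm y / 2 - q.length) := by
    rw [initialHalf, hy, List.take_append, List.take_of_length_le (by omega)]
  have h₅ : initialHalf (x * y)⁻¹ = initialHalf y⁻¹ := by
    rw [initialHalf, initialHalf, toWord_inv, toWord_inv, hmul, hy, invRev_append, invRev_append,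
      norm_inv_eq, norm_inv_eq, List.take_append_of_le_length (by rw [invRev_length]; omega),
      List.take_append_of_le_length (by rw [invRev_length]; omega)]
    congr 1
    omega
  rw [halfCode, halfCode, h₅, h₃, h₄, Nat.add_lt_add_iff_right,
    wordCode_append_lt_iff (by rw [invRev_length, haq])]
  rwa [h₁, h₂] at hlt

/-- The norm of an element of a free group, refined lexicographically by `halfCode`. -/
noncomputable def nielsenWeight (x : FreeGroup α) : ℕ ×ₗ ℕ :=
  toLex (norm x, halfCode x)

theorem nielsenWeight_inv (x : FreeGroup α) : nielsenWeight x⁻¹ = nielsenWeight x := by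
  rw [nielsenWeight, nielsenWeight, norm_inv_eq, halfCode_inv]

theorem nielsenWeight_lt_iff {x y : FreeGroup α} : nielsenWeight x < nielsenWeight y ↔
    norm x < norm y ∨ norm x = norm y ∧ halfCode x < halfCode y := by
  simp [nielsenWeight, Prod.Lex.lt_iff]

end Weight

section Nielsen

variable {ι : Type*}

/-- The element of a family, or its inverse, that corresponds to a letter. -/
def letter {G : Type*} [Group G] (w : ι → G) (a : ι × Bool) : G :=
  cond a.2 (w a.1) (w a.1)⁻¹

theorem letter_not {G : Type*} [Group G] (w : ι → G) (i : ι) (s : Bool) :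
    letter w (i, !s) = (letter w (i, s))⁻¹ := by
  cases s <;> simp [letter]

/-- Nielsen's criterion: if cancellation between consecutive letters never eats up a letter of
the family, then the family freely generates. -/
theorem lift_injective_of_gromovProduct_lt (w : ι → FreeGroup α) (h₀ : ∀ i, w i ≠ 1)
    (h₁ : ∀ a b : ι × Bool, (a.1 = b.1 → a.2 = b.2) →
      2 * gromovProduct (letter w a)⁻¹ (letter w b) ≤ norm (letter w a))
    (h₂ : ∀ a b c : ι × Bool, (a.1 = b.1 → a.2 = b.2) → (b.1 = c.1 → b.2 = c.2) →
      gromovProduct (letter w a)⁻¹ (letter w b) + gromovProduct (letter w b)⁻¹ (letter w c) <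
        norm (letter w b)) :
    Function.Injective (lift w) := by
  classical
  have key (L : List (ι × Bool)) : ∀ b a, IsReduced (b :: a :: L) →
      gromovProduct (letter w b)⁻¹ ((a :: L).map (letter w)).prod =
        gromovProduct (letter w b)⁻¹ (letter w a) := by
    induction L with
    | nil => intro b a _; simp
    | cons d L ih =>
      intro b a h
      rw [isReduced_cons_cons] at h
      have hQ := ih a d h.2
      have h' := h.2
      rw [isReduced_cons_cons] at h'
      have hlt := h₂ b a d h.1 h'.1
      rw [List.map_cons, List.prod_cons]
      set Q := ((d :: L).map (letter w)).prod
      have e := gromovProduct_self_mul_add (letter w a) Q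
      have m₁ := min_gromovProduct_le (letter w b)⁻¹ (letter w a) (letter w a * Q)
      have m₂ := min_gromovProduct_le (letter w b)⁻¹ (letter w a * Q) (letter w a)
      rw [gromovProduct_comm (letter w a * Q)] at m₂
      omega
  rw [injective_iff_map_eq_one]
  intro x hx
  by_contra hne
  have hred : IsReduced x.toWord := isReduced_toWord
  have hprod : (x.toWord.map (letter w)).prod = 1 := by
    rw [← hx]
    conv_rhs => rw [← mk_toWord (x := x), lift_mk]
    rfl
  rcases hL : x.toWord with _ | ⟨a, L⟩
  · exact hne (toWord_eq_nil_iff.1 hL)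
  rw [hL] at hred hprod
  have ha : letter w a ≠ 1 := by
    rcases a with ⟨i, s⟩
    cases s <;> simpa [letter] using h₀ i
  have hpos : 0 < norm (letter w a) := Nat.pos_of_ne_zero fun h => ha (norm_eq_zero.1 h)
  rcases L with _ | ⟨d, L⟩
  · simp at hprod
    exact ha hprod
  · have hk := key L a d hred
    rw [isReduced_cons_cons] at hred
    have h1 := h₁ a d hred.1
    rw [List.map_cons, List.prod_cons] at hprod
    have e := gromovProduct_self_mul_add (letter w a) ((d :: L).map (letter w)).prod
    rw [hprod, gromovProduct_one_right, hk] at e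
    omega

theorem lift_injective_of_not_nielsenWeight_lt [Fintype α] (w : ι → FreeGroup α)
    (h₀ : ∀ i, w i ≠ 1)
    (hw : ∀ a b : ι × Bool, a.1 ≠ b.1 →
      ¬ nielsenWeight (letter w a * letter w b) < nielsenWeight (letter w b)) :
    Function.Injective (lift w) := by
  have hone (a : ι × Bool) : letter w a ≠ 1 := by
    rcases a with ⟨i, s⟩
    cases s <;> simpa [letter] using h₀ i
  have hself (a b : ι × Bool) (hab : a.1 = b.1 → a.2 = b.2) (h : a.1 = b.1) :
      2 * gromovProduct (letter w a)⁻¹ (letter w b) < norm (letter w a) := by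
    rw [show b = a from (Prod.ext h (hab h)).symm]
    exact two_mul_gromovProduct_inv_self_lt (hone a)
  have hleft (a b : ι × Bool) (hab : a.1 = b.1 → a.2 = b.2) :
      2 * gromovProduct (letter w a)⁻¹ (letter w b) ≤ norm (letter w a) := by
    by_cases h : a.1 = b.1
    · exact (hself a b hab h).le
    · have := hw a b h
      rw [nielsenWeight_lt_iff] at this
      have := norm_mul_add (letter w a) (letter w b)
      omega
  have hflip (a b : ι × Bool) :
      gromovProduct (letter w (b.1, !b.2))⁻¹ (letter w (a.1, !a.2)) =
        gromovProduct (letter w a)⁻¹ (letter w b) := by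
    rw [letter_not, letter_not, inv_inv, gromovProduct_comm]
  have hright (a b : ι × Bool) (hab : a.1 = b.1 → a.2 = b.2) :
      2 * gromovProduct (letter w a)⁻¹ (letter w b) ≤ norm (letter w b) := by
    have := hleft (b.1, !b.2) (a.1, !a.2) (fun h => by simp [hab h.symm])
    rwa [hflip, letter_not, norm_inv_eq] at this
  have htie (a b : ι × Bool) (hab : a.1 = b.1 → a.2 = b.2)
      (heq : 2 * gromovProduct (letter w a)⁻¹ (letter w b) = norm (letter w a)) :
      wordCode (initialHalf (letter w a)⁻¹) ≤ wordCode (initialHalf (letter w a)) := by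
    by_contra! hlt
    have hne : a.1 ≠ b.1 := fun h => (hself a b hab h).ne heq
    refine hw a b hne (nielsenWeight_lt_iff.2 (Or.inr ⟨?_, ?_⟩))
    · have := norm_mul_add (letter w a) (letter w b)
      omega
    · exact halfCode_mul_lt heq (heq ▸ hright a b hab) hlt
  refine lift_injective_of_gromovProduct_lt w h₀ hleft fun a b c hab hbc => ?_
  by_contra! hge
  have e₁ := hright a b hab
  have e₂ := hleft b c hbc
  have t₁ := htie b c hbc (by omega)
  have t₂ := htie (b.1, !b.2) (a.1, !a.2) (fun h => by simp [hab h.symm])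
    (by rw [hflip, letter_not, norm_inv_eq]; change _ = norm (letter w b); omega)
  rw [letter_not, inv_inv] at t₂
  refine hone b (eq_one_of_initialHalf_eq (x := letter w b)
    ⟨gromovProduct (letter w a)⁻¹ (letter w b), by omega⟩
    (eq_of_wordCode_eq ?_ (le_antisymm t₂ t₁)))
  have hn : norm (letter w b)⁻¹ = norm (letter w b) := norm_inv_eq
  simp only [initialHalf, List.length_take, hn]
  change min _ (norm _) = min _ (norm _)
  rw [hn]

end Nielsen

end FreeGroup

namespace FreeGroup

section Kernel

variable {ι α : Type*}

/-- The Nielsen automorphism `xⱼ ↦ a xⱼ b` for words `a`, `b` that do not involve `xⱼ`. -/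
noncomputable def transvection [DecidableEq ι] (j : ι) (a b : FreeGroup ι)
    (ha : ∀ c, lift (Function.update of j c) a = a)
    (hb : ∀ c, lift (Function.update of j c) b = b) : FreeGroup ι ≃* FreeGroup ι :=
  MonoidHom.toMulEquiv (lift (Function.update of j (a * of j * b)))
    (lift (Function.update of j (a⁻¹ * of j * b⁻¹)))
    (by
      ext k
      by_cases h : k = j
      · subst h
        simp [ha, hb, mul_assoc]
      · simp [h])
    (by
      ext k
      by_cases h : k = j
      · subst h
        simp [ha, hb, mul_assoc]
      · simp [h])

theorem exists_mulEquiv_letter_mul {G : Type*} [Group G] (φ : FreeGroup ι →* G)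
    (a b : ι × Bool) (hab : a.1 ≠ b.1) :
    ∃ e : FreeGroup ι ≃* FreeGroup ι,
      letter (fun i => φ (e (of i))) b =
        letter (fun i => φ (of i)) a * letter (fun i => φ (of i)) b ∧
      ∀ k, k ≠ b.1 → φ (e (of k)) = φ (of k) := by
  classical
  obtain ⟨i, s⟩ := a
  obtain ⟨j, t⟩ := b
  have hfix (s : Bool) (c : FreeGroup ι) :
      lift (Function.update of j c) (letter of (i, s)) = letter of (i, s) := by
    have hij : i ≠ j := hab
    cases s <;> simp [letter, hij]
  have hφ : φ (letter of (i, s)) = letter (fun i => φ (of i)) (i, s) := by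
    cases s <;> simp [letter]
  cases t with
  | true =>
    refine ⟨transvection j (letter of (i, s)) 1 (hfix s) (by simp), ?_, fun k hk => ?_⟩
    · rw [← hφ]
      simp only [letter, transvection, MonoidHom.toMulEquiv_apply, lift_apply_of, cond_true,
        Function.update_self, mul_one, _root_.map_mul]
    · have hkj : k ≠ j := hk
      simp [transvection, hkj]
  | false =>
    refine ⟨transvection j 1 (letter of (i, !s)) (by simp) (hfix _), ?_, fun k hk => ?_⟩
    · rw [← hφ]
      simp only [letter, transvection, MonoidHom.toMulEquiv_apply, lift_apply_of, cond_false,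
        Function.update_self, one_mul, _root_.map_mul, mul_inv_rev]
      cases s <;> simp
    · have hkj : k ≠ j := hk
      simp [transvection, hkj]

theorem nielsenWeight_letter [DecidableEq α] [Fintype α] (w : ι → FreeGroup α) (a : ι × Bool) :
    nielsenWeight (letter w a) = nielsenWeight (w a.1) := by
  rcases a with ⟨i, s⟩
  cases s <;> simp [letter, nielsenWeight_inv]

/-- A homomorphism between free groups of finite rank that is not injective kills an element of
some basis. -/
theorem exists_mulEquiv_apply_of_eq_one [Finite ι] [Finite α] (φ : FreeGroup ι →* FreeGroup α)
    (hφ : ¬ Function.Injective φ) :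
    ∃ (e : FreeGroup ι ≃* FreeGroup ι) (i : ι), φ (e (of i)) = 1 := by
  classical
  have := Fintype.ofFinite ι
  have := Fintype.ofFinite α
  by_contra! hne
  let f (e : FreeGroup ι ≃* FreeGroup ι) : ℕ ×ₗ ℕ := ∑ i, nielsenWeight (φ (e (of i)))
  have : Nonempty (FreeGroup ι ≃* FreeGroup ι) := ⟨MulEquiv.refl _⟩
  let e := Function.argmin f
  let w (i : ι) : FreeGroup α := φ (e (of i))
  have hw : φ.comp (e : FreeGroup ι →* FreeGroup ι) = lift w := by
    ext i
    simp [w]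
  have hinj : Function.Injective (lift w) := by
    refine lift_injective_of_not_nielsenWeight_lt w (hne e) fun a b hab hlt => ?_
    obtain ⟨e', hb, hk⟩ := exists_mulEquiv_letter_mul
      (φ.comp (e : FreeGroup ι →* FreeGroup ι)) a b hab
    have hlt' : nielsenWeight (φ (e (e' (of b.1)))) < nielsenWeight (φ (e (of b.1))) := by
      rw [← nielsenWeight_letter w b, ← nielsenWeight_letter (fun i => φ (e (e' (of i)))) b]
      exact (congrArg nielsenWeight hb).trans_lt hlt
    refine Function.not_lt_argmin f (e'.trans e) (Finset.sum_lt_sum (fun k _ => ?_)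
      ⟨b.1, Finset.mem_univ _, ?_⟩)
    · by_cases h : k = b.1
      · subst h
        exact hlt'.le
      · exact (congrArg nielsenWeight (hk k h)).le
    · exact hlt'
  refine hφ fun x y hxy => ?_
  obtain ⟨x, rfl⟩ := e.surjective x
  obtain ⟨y, rfl⟩ := e.surjective y
  refine congrArg e (hinj ?_)
  rw [← hw]
  exact hxy

/-- The homomorphism that kills one of the generators. -/
def eraseGenerator {m : ℕ} (i : Fin (m + 1)) : FreeGroup (Fin (m + 1)) →* FreeGroup (Fin m) :=
  lift (Fin.insertNth (α := fun _ => FreeGroup (Fin m)) i 1 of)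

theorem eraseGenerator_of_self {m : ℕ} (i : Fin (m + 1)) : eraseGenerator i (of i) = 1 := by
  simp [eraseGenerator]

theorem eraseGenerator_map_succAbove {m : ℕ} (i : Fin (m + 1)) (t : FreeGroup (Fin m)) :
    eraseGenerator i (map i.succAbove t) = t := by
  have : (eraseGenerator i).comp (map i.succAbove) = MonoidHom.id _ := by
    ext k
    simp [eraseGenerator]
  exact DFunLike.congr_fun this t

theorem apply_map_succAbove_eraseGenerator {G : Type*} [Group G] {m : ℕ} (i : Fin (m + 1))
    (φ : FreeGroup (Fin (m + 1)) →* G) (hi : φ (of i) = 1) (z : FreeGroup (Fin (m + 1))) :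
    φ (map i.succAbove (eraseGenerator i z)) = φ z := by
  have : φ.comp ((map i.succAbove).comp (eraseGenerator i)) = φ := by
    ext k
    rcases Fin.eq_self_or_eq_succAbove i k with rfl | ⟨k, rfl⟩ <;> simp [eraseGenerator, hi]
  exact DFunLike.congr_fun this z

theorem normalClosure_insert_eq_ker {G : Type*} [Group G] {m : ℕ} (i : Fin (m + 1))
    (φ : FreeGroup (Fin (m + 1)) →* G) (hi : φ (of i) = 1) (T : Set (FreeGroup (Fin m)))
    (hT : Subgroup.normalClosure T = (φ.comp (map i.succAbove)).ker) :
    Subgroup.normalClosure (insert (of i) (map i.succAbove '' T)) = φ.ker := by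
  set S := insert (of i) (map i.succAbove '' T)
  have hTker (t : FreeGroup (Fin m)) (ht : φ (map i.succAbove t) = 1) :
      map i.succAbove t ∈ Subgroup.normalClosure S := by
    have h : t ∈ Subgroup.normalClosure T := hT ▸ ht
    exact Subgroup.normalClosure_mono (Set.subset_insert _ _)
      (Subgroup.map_normalClosure_le T _ (Subgroup.mem_map_of_mem _ h))
  apply le_antisymm
  · refine Subgroup.normalClosure_le_normal ?_
    rintro _ (rfl | ⟨t, ht, rfl⟩)
    · exact hi
    · have h : t ∈ (φ.comp (map i.succAbove)).ker := hT ▸ Subgroup.subset_normalClosure ht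
      exact h
  · intro z hz
    rw [← QuotientGroup.eq_one_iff]
    change QuotientGroup.mk' (Subgroup.normalClosure S) z = 1
    rw [← apply_map_succAbove_eraseGenerator i (QuotientGroup.mk' (Subgroup.normalClosure S))
      ((QuotientGroup.eq_one_iff _).2 (Subgroup.subset_normalClosure (Set.mem_insert _ _)))]
    refine (QuotientGroup.eq_one_iff _).2 (hTker _ ?_)
    rwa [apply_map_succAbove_eraseGenerator i φ hi]

/-- The property of a homomorphism to have a kernel normally generated by exactly `k` elements. -/
def KerNormallyGenerated {G K : Type*} [Group G] [Group K] (φ : G →* K) (k : ℕ) : Prop :=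
  ∃ T : Finset G, T.card = k ∧ Subgroup.normalClosure (T : Set G) = φ.ker

theorem KerNormallyGenerated.of_comp_mulEquiv {G G' K : Type*} [Group G] [Group G'] [Group K]
    {φ : G →* K} {k : ℕ} (e : G' ≃* G)
    (h : KerNormallyGenerated (φ.comp (e : G' →* G)) k) : KerNormallyGenerated φ k := by
  obtain ⟨T, hk, hT⟩ := h
  refine ⟨T.map e.toEquiv.toEmbedding, by simpa using hk, ?_⟩
  rw [Finset.coe_map]
  change Subgroup.normalClosure ((e : G' →* G) '' (T : Set G')) = _
  rw [← Subgroup.map_normalClosure _ _ e.surjective, hT, ← MonoidHom.comap_ker,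
    Subgroup.map_comap_eq_self_of_surjective e.surjective]

/-- The kernel of a surjection between free groups of ranks `n` and `s` is normally generated by
`n - s` elements. -/
theorem kerNormallyGenerated_of_surjective [Finite α] (n : ℕ)
    (φ : FreeGroup (Fin n) →* FreeGroup α) (hφ : Function.Surjective φ) :
    KerNormallyGenerated φ (n - Nat.card α) ∧ Nat.card α ≤ n := by
  by_cases hinj : Function.Injective φ
  · have hc : Nat.card α = n := by
      rw [← Nat.card_congr (Equiv.ofFreeGroupEquiv (MulEquiv.ofBijective φ ⟨hinj, hφ⟩)),
        Nat.card_fin]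
    exact ⟨⟨∅, by simp [hc], by simp [(MonoidHom.ker_eq_bot_iff φ).2 hinj]⟩, hc.le⟩
  classical
  obtain ⟨e, i, hi⟩ := exists_mulEquiv_apply_of_eq_one φ hinj
  cases n with
  | zero => exact i.elim0
  | succ m =>
    set ψ := φ.comp (e : FreeGroup (Fin (m + 1)) →* FreeGroup (Fin (m + 1)))
    have hψi : ψ (of i) = 1 := hi
    have hψ : Function.Surjective ψ := hφ.comp e.surjective
    have hsurj : Function.Surjective (ψ.comp (map i.succAbove)) := by
      intro y
      obtain ⟨z, rfl⟩ := hψ y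
      exact ⟨eraseGenerator i z, apply_map_succAbove_eraseGenerator i ψ hψi z⟩
    obtain ⟨⟨T, hcard, hT⟩, hle⟩ := kerNormallyGenerated_of_surjective m _ hsurj
    refine ⟨KerNormallyGenerated.of_comp_mulEquiv e
      ⟨insert (of i) (T.image (map i.succAbove)), ?_, ?_⟩, by omega⟩
    · rw [Finset.card_insert_of_notMem, Finset.card_image_of_injective _
        (map_injective Fin.succAbove_right_injective), hcard]
      · omega
      · intro hmem
        obtain ⟨t, -, ht⟩ := Finset.mem_image.1 hmem
        have h := eraseGenerator_map_succAbove i t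
        rw [ht, eraseGenerator_of_self] at h
        rw [← h, _root_.map_one] at ht
        exact one_ne_of i ht
    · rw [Finset.coe_insert, Finset.coe_image]
      exact normalClosure_insert_eq_ker i ψ hψi T hT

end Kernel

end FreeGroup

/-- The free product of two free groups is free on the disjoint union of the generators. -/
noncomputable def FreeGroup.sumMulEquivCoprod {ι κ H : Type*} [Group H] (e : FreeGroup ι ≃* H) :
    FreeGroup (ι ⊕ κ) ≃* H ∗ FreeGroup κ :=
  MonoidHom.toMulEquiv
    (FreeGroup.lift (Sum.elim (fun i => Monoid.Coprod.inl (e (FreeGroup.of i)))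
      fun k => Monoid.Coprod.inr (FreeGroup.of k)))
    (Monoid.Coprod.lift ((FreeGroup.map Sum.inl).comp (e.symm : H →* FreeGroup ι))
      (FreeGroup.map Sum.inr))
    (by ext (i | k) <;> simp)
    (by
      refine Monoid.Coprod.hom_ext ?_ ?_
      · have h : (FreeGroup.lift (Sum.elim (fun i => Monoid.Coprod.inl (e (FreeGroup.of i)))
            fun k => Monoid.Coprod.inr (FreeGroup.of k))).comp (FreeGroup.map Sum.inl) =
            (Monoid.Coprod.inl : H →* H ∗ FreeGroup κ).comp (e : FreeGroup ι →* H) := by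
          ext i
          simp
        ext x
        simpa using DFunLike.congr_fun h (e.symm x)
      · ext k
        simp)

theorem nonempty_mulEquiv_of_rk_eq [Group F] [IsFreeGroup F] (K : Subgroup F) (n : ℕ)
    (hK : rk K = n) : Nonempty (FreeGroup (Fin n) ≃* K) := by
  have : Nonempty {S : Set F // Subgroup.closure S = K} := ⟨⟨K, K.closure_eq⟩⟩
  obtain ⟨⟨S, hS⟩, hSn⟩ := ciInf_mem fun S : {S : Set F // Subgroup.closure S = K} =>
    Cardinal.mk S.1
  have hSn : Cardinal.mk S = n := hSn.trans hK
  have hSfin : Finite S := Cardinal.mk_lt_aleph0_iff.1 (hSn ▸ Cardinal.natCast_lt_aleph0)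
  have hScard : Nat.card S = n := by rw [Nat.card, hSn, Cardinal.toNat_natCast]
  have hSK : S ⊆ K := hS ▸ Subgroup.subset_closure
  let X := IsFreeGroup.Generators K
  let restr (f : X → Multiplicative (ZMod 2)) (x : S) : Multiplicative (ZMod 2) :=
    IsFreeGroup.lift f ⟨x, hSK x.2⟩
  have hrestr : Function.Injective restr := by
    intro f f' h
    apply IsFreeGroup.lift.injective
    have hmap : K ≤ ((IsFreeGroup.lift f).eqLocus (IsFreeGroup.lift f')).map K.subtype := by
      refine hS.ge.trans ((Subgroup.closure_le _).2 ?_)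
      exact fun x hx => ⟨⟨x, hSK hx⟩, congrFun h ⟨x, hx⟩, rfl⟩
    ext x
    obtain ⟨y, hy, hyx⟩ := hmap x.2
    rwa [← Subtype.ext hyx]
  have hXfin : Finite X := by
    classical
    have := Finite.of_injective restr hrestr
    refine Finite.of_injective (fun x : X =>
      (Pi.mulSingle x (Multiplicative.ofAdd 1) : X → Multiplicative (ZMod 2))) fun x y hxy => ?_
    by_contra hne
    have h := congrFun hxy x
    simp [Pi.mulSingle_eq_of_ne hne] at h
  have hle : Nat.card X ≤ n := by
    have := Nat.card_le_card_of_injective restr hrestr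
    rw [Nat.card_fun, Nat.card_fun, hScard] at this
    simpa [Nat.pow_le_pow_iff_right] using this
  have hge : n ≤ Nat.card X := by
    have hcl : Subgroup.closure (Set.range fun x : X => (IsFreeGroup.of (G := K) x : F)) = K := by
      have h : (fun x : X => (IsFreeGroup.of (G := K) x : F)) =
          K.subtype.comp (IsFreeGroup.mulEquiv K : FreeGroup X →* K) ∘ FreeGroup.of := rfl
      rw [h, Set.range_comp, ← MonoidHom.map_closure, FreeGroup.closure_range_of,
        ← Subgroup.map_map, Subgroup.map_top_of_surjective _ (IsFreeGroup.mulEquiv K).surjective,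
        ← MonoidHom.range_eq_map, Subgroup.range_subtype]
    have h₁ : rk K ≤ Cardinal.mk (Set.range fun x : X => (IsFreeGroup.of (G := K) x : F)) :=
      ciInf_le' (fun S : {S : Set F // Subgroup.closure S = K} => Cardinal.mk S.1) ⟨_, hcl⟩
    have h₂ := h₁.trans Cardinal.mk_range_le
    rw [hK, ← Nat.cast_card] at h₂
    exact_mod_cast h₂
  have hcard : Nat.card X = n := le_antisymm hle hge
  exact ⟨(FreeGroup.freeGroupCongr (Finite.equivFinOfCardEq hcard).symm).trans
    (IsFreeGroup.mulEquiv K)⟩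

theorem range_phi [Group F] (H : Subgroup F) (g : F) :
    (phi H g).range = H ⊔ Subgroup.closure {g} := by
  rw [phi, Monoid.Coprod.range_lift, FreeGroup.range_lift_eq_closure, Subgroup.range_subtype,
    Set.range_const]

/-- if `H` has rank `r`, `g` depends on `H`, and `s = rank ⟨H, g⟩`, then
`ker φ_g = Eqn(H, g)` is the normal closure in `H ∗ ⟨x⟩` of a set of `r + 1 - s`
elements (in particular, of at most `r + 1` elements). -/
theorem ker_phi_normally_finitely_generated [Group F] [IsFreeGroup F]
    (H : Subgroup F) (r s : ℕ) (hH : H.FG) (hr : rk H = r)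
    (g : F) (hg : Depends H g) (hs : rk (H ⊔ Subgroup.closure {g}) = s) :
    ∃ T : Finset (↥H ∗ FreeGroup Unit),
      T.card = r + 1 - s ∧
      Subgroup.normalClosure (T : Set (↥H ∗ FreeGroup Unit)) = (phi H g).ker := by
  obtain ⟨eH⟩ := nonempty_mulEquiv_of_rk_eq H r hr
  rw [← range_phi] at hs
  obtain ⟨eK⟩ := nonempty_mulEquiv_of_rk_eq _ s hs
  let ψ : (↥H ∗ FreeGroup Unit) →* FreeGroup (Fin s) :=
    (eK.symm : (phi H g).range →* FreeGroup (Fin s)).comp (phi H g).rangeRestrict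
  have hψ : Function.Surjective ψ := eK.symm.surjective.comp (phi H g).rangeRestrict_surjective
  have hker : ψ.ker = (phi H g).ker := by
    rw [← (phi H g).ker_rangeRestrict]
    ext x
    simp [ψ, MonoidHom.mem_ker]
  let e : FreeGroup (Fin (r + 1)) ≃* ↥H ∗ FreeGroup Unit :=
    (FreeGroup.freeGroupCongr (Fintype.equivOfCardEq (by simp))).trans
      (FreeGroup.sumMulEquivCoprod (κ := Unit) eH)
  obtain ⟨T, hT, hTψ⟩ := FreeGroup.KerNormallyGenerated.of_comp_mulEquiv e
    (FreeGroup.kerNormallyGenerated_of_surjective (r + 1)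
      (ψ.comp (e : FreeGroup (Fin (r + 1)) →* ↥H ∗ FreeGroup Unit)) (hψ.comp e.surjective)).1
  exact ⟨T, by rwa [Nat.card_fin] at hT, hTψ.trans hker⟩
end

section
/- Let H be a finitely generated subgroup of a free group F. Then there exists an integer n such that every g ∈ F that depends on H satisfies a nontrivial equation over H of degree at most n; that is, for every g ∈ dep(H) there exists w ∈ ker φ_g with w ≠ 1 and deg(w) ≤ n. -/
open scoped Monoid.Coprod

variable {F : Type*}

/-- The degree of an equation `w ∈ H ∗ ⟨x⟩`: writing
`w = h₁ x^{i₁} h₂ x^{i₂} ⋯ h_m x^{i_m} h_{m+1}`, the degree is `Σ |i_j|`; here it is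
defined as the minimum of `Σ |i_j|` over all such representations, which is attained at
the reduced normal form. -/
noncomputable def eqnDegree [Group F] {H : Subgroup F} (w : ↥H ∗ FreeGroup Unit) : ℕ :=
  sInf {n | ∃ l : List (↥H × ℤ), ∃ h : ↥H,
    (l.map fun p => Monoid.Coprod.inl p.1 *
        Monoid.Coprod.inr (FreeGroup.of () ^ p.2)).prod * Monoid.Coprod.inl h = w ∧
    (l.map fun p => p.2.natAbs).sum = n}

theorem phi_comp_eq {F F' : Type*} [Group F] [Group F'] (e : F ≃* F') (H : Subgroup F) (g : F) :
    (phi (H.map (e : F →* F')) (e g)).comp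
      (Monoid.Coprod.map (e.subgroupMap H : ↥H →* ↥(H.map (e : F →* F')))
        (MonoidHom.id (FreeGroup Unit))) =
      (e : F →* F').comp (phi H g) := by
  ext x <;> simp [phi]

/-- Dependence is invariant under isomorphisms of the ambient group. -/
theorem Depends.map {F F' : Type*} [Group F] [Group F'] (e : F ≃* F') {H : Subgroup F} {g : F}
    (h : Depends H g) : Depends (H.map (e : F →* F')) (e g) := by
  intro hinj
  refine h (Function.Injective.of_comp (f := e) ?_)
  have hmap : Function.Injective (Monoid.Coprod.map
      (e.subgroupMap H : ↥H →* ↥(H.map (e : F →* F'))) (MonoidHom.id (FreeGroup Unit))) :=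
    (MulEquiv.coprodCongr (e.subgroupMap H) (MulEquiv.refl (FreeGroup Unit))).injective
  have := congrArg DFunLike.coe (phi_comp_eq e H g)
  simp only [MonoidHom.coe_comp] at this
  have h2 := hinj.comp hmap
  rw [this] at h2
  exact h2

theorem FreeGroup.exists_zpow_of_unit (z : FreeGroup Unit) : ∃ n : ℤ, FreeGroup.of () ^ n = z := by
  induction z using FreeGroup.induction_on with
  | C1 => exact ⟨0, by simp⟩
  | of x => exact ⟨1, by simp⟩
  | inv_of x _ => exact ⟨-1, by simp⟩
  | mul x y hx hy =>
    obtain ⟨n, rfl⟩ := hx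
    obtain ⟨m, rfl⟩ := hy
    exact ⟨n + m, zpow_add _ _ _⟩

section Degree

variable [Group F] {H : Subgroup F}

theorem eqnDegree_le (l : List (↥H × ℤ)) (h : ↥H) :
    eqnDegree ((l.map fun p => Monoid.Coprod.inl p.1 *
        Monoid.Coprod.inr (FreeGroup.of () ^ p.2)).prod * Monoid.Coprod.inl h) ≤
      (l.map fun p => p.2.natAbs).sum :=
  Nat.sInf_le ⟨l, h, rfl, rfl⟩

theorem exists_list_eq (w : ↥H ∗ FreeGroup Unit) : ∃ l : List (↥H × ℤ), ∃ h : ↥H,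
    (l.map fun p => Monoid.Coprod.inl p.1 *
        Monoid.Coprod.inr (FreeGroup.of () ^ p.2)).prod * Monoid.Coprod.inl h = w := by
  induction w using Monoid.Coprod.induction_on with
  | inl h => exact ⟨[], h, by simp⟩
  | inr z =>
    obtain ⟨n, rfl⟩ := FreeGroup.exists_zpow_of_unit z
    exact ⟨[(1, n)], 1, by simp⟩
  | mul u v hu hv =>
    obtain ⟨l, h, rfl⟩ := hu
    obtain ⟨l', h', rfl⟩ := hv
    exact ⟨l ++ (h, 0) :: l', h', by simp [mul_assoc]⟩

theorem exists_list_eq_eqnDegree (w : ↥H ∗ FreeGroup Unit) : ∃ l : List (↥H × ℤ), ∃ h : ↥H,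
    (l.map fun p => Monoid.Coprod.inl p.1 *
        Monoid.Coprod.inr (FreeGroup.of () ^ p.2)).prod * Monoid.Coprod.inl h = w ∧
    (l.map fun p => p.2.natAbs).sum = eqnDegree w := by
  obtain ⟨l, h, hw⟩ := exists_list_eq w
  exact Nat.sInf_mem (s := {n | ∃ l : List (↥H × ℤ), ∃ h : ↥H,
    (l.map fun p => Monoid.Coprod.inl p.1 *
        Monoid.Coprod.inr (FreeGroup.of () ^ p.2)).prod * Monoid.Coprod.inl h = w ∧
    (l.map fun p => p.2.natAbs).sum = n}) ⟨_, l, h, hw, rfl⟩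

theorem eqnDegree_mul_le (u v : ↥H ∗ FreeGroup Unit) :
    eqnDegree (u * v) ≤ eqnDegree u + eqnDegree v := by
  obtain ⟨l, h, hu, hdu⟩ := exists_list_eq_eqnDegree u
  obtain ⟨l', h', hv, hdv⟩ := exists_list_eq_eqnDegree v
  have := eqnDegree_le (l ++ (h, 0) :: l') h'
  rw [← hdu, ← hdv, ← hu, ← hv]
  simpa [mul_assoc] using this

theorem eqnDegree_inl (h : ↥H) :
    eqnDegree (Monoid.Coprod.inl h : ↥H ∗ FreeGroup Unit) = 0 := by
  simpa using eqnDegree_le [] h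

theorem eqnDegree_inl_mul_inr_mul_inl_le (a b : ↥H) (n : ℤ) :
    eqnDegree (Monoid.Coprod.inl a * Monoid.Coprod.inr (FreeGroup.of () ^ n) *
      Monoid.Coprod.inl b) ≤ n.natAbs := by
  simpa using eqnDegree_le [(a, n)] b

theorem eqnDegree_pow_le (u : ↥H ∗ FreeGroup Unit) (n : ℕ) :
    eqnDegree (u ^ n) ≤ n * eqnDegree u := by
  induction n with
  | zero => simpa using (eqnDegree_inl (1 : ↥H)).le
  | succ n ih =>
    rw [pow_succ, Nat.add_mul, one_mul]
    exact (eqnDegree_mul_le _ _).trans (by gcongr)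

/-- The substitution `x ↦ a x b` in equations over `H`. -/
noncomputable def eqnSubst (a b : ↥H) : (↥H ∗ FreeGroup Unit) →* (↥H ∗ FreeGroup Unit) :=
  Monoid.Coprod.lift Monoid.Coprod.inl (FreeGroup.lift fun _ =>
    Monoid.Coprod.inl a * Monoid.Coprod.inr (FreeGroup.of ()) * Monoid.Coprod.inl b)

theorem eqnSubst_inr (a b : ↥H) (n : ℤ) :
    eqnSubst a b (Monoid.Coprod.inr (FreeGroup.of () ^ n)) =
      (Monoid.Coprod.inl a * Monoid.Coprod.inr (FreeGroup.of ()) * Monoid.Coprod.inl b) ^ n := by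
  simp [eqnSubst]

theorem eqnDegree_eqnSubst_inr_le (a b : ↥H) (n : ℤ) :
    eqnDegree (eqnSubst a b (Monoid.Coprod.inr (FreeGroup.of () ^ n))) ≤ n.natAbs := by
  set u : ↥H ∗ FreeGroup Unit :=
    Monoid.Coprod.inl a * Monoid.Coprod.inr (FreeGroup.of ()) * Monoid.Coprod.inl b with hu
  have h1 : eqnDegree u ≤ 1 := by
    simpa using eqnDegree_inl_mul_inr_mul_inl_le a b 1
  have h2 : eqnDegree u⁻¹ ≤ 1 := by
    simpa [hu, mul_assoc] using eqnDegree_inl_mul_inr_mul_inl_le b⁻¹ a⁻¹ (-1)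
  rw [eqnSubst_inr, ← hu]
  obtain ⟨m, rfl | rfl⟩ := n.eq_nat_or_neg
  · rw [zpow_natCast, Int.natAbs_natCast]
    exact (eqnDegree_pow_le u m).trans (by simpa using Nat.mul_le_mul_left m h1)
  · rw [zpow_neg, zpow_natCast, ← inv_pow, Int.natAbs_neg, Int.natAbs_natCast]
    exact (eqnDegree_pow_le u⁻¹ m).trans (Nat.mul_le_mul_left m h2 |>.trans_eq (mul_one m))

theorem eqnDegree_eqnSubst_le (a b : ↥H) (w : ↥H ∗ FreeGroup Unit) :
    eqnDegree (eqnSubst a b w) ≤ eqnDegree w := by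
  obtain ⟨l, h, hw, hd⟩ := exists_list_eq_eqnDegree w
  rw [← hd, ← hw, map_mul]
  have hinl (c : ↥H) : eqnSubst a b (Monoid.Coprod.inl c) = Monoid.Coprod.inl c := by
    simp [eqnSubst]
  refine (eqnDegree_mul_le _ _).trans ?_
  rw [hinl, eqnDegree_inl, add_zero]
  clear hd hw
  induction l with
  | nil => simpa using (eqnDegree_inl (1 : ↥H)).le
  | cons p l ih =>
    simp only [List.map_cons, List.prod_cons, List.sum_cons, map_mul] at ih ⊢
    refine (eqnDegree_mul_le _ _).trans (add_le_add ((eqnDegree_mul_le _ _).trans ?_) ih)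
    rw [hinl, eqnDegree_inl, zero_add]
    exact eqnDegree_eqnSubst_inr_le a b p.2

theorem phi_comp_eqnSubst (a b : ↥H) (g : F) :
    (phi H g).comp (eqnSubst a b) = phi H (a * g * b) := by
  ext x <;> simp [phi, eqnSubst]

theorem eqnSubst_injective (a b : ↥H) : Function.Injective (eqnSubst a b) := by
  have h : (eqnSubst a⁻¹ b⁻¹).comp (eqnSubst a b) = MonoidHom.id _ := by
    ext x <;> simp [eqnSubst, mul_assoc]
  exact Function.LeftInverse.injective (DFunLike.congr_fun h)

/-- Dependence on `H` only depends on the double coset of `H`. -/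
theorem Depends.of_mul_mul {a b : ↥H} {g : F} (h : Depends H (a * g * b)) : Depends H g := by
  intro hinj
  apply h
  rw [← phi_comp_eqnSubst]
  exact hinj.comp (eqnSubst_injective a b)

/-- If `dep H` meets only finitely many double cosets of `H`, then the degrees of nontrivial
equations satisfied by its elements can be bounded uniformly. -/
theorem exists_degree_bound_of_finite_doubleCosets {D : Set F} (hD : D.Finite)
    (hdep : ∀ g, Depends H g → ∃ a b : ↥H, ∃ d ∈ D, g = a * d * b) :
    ∃ n : ℕ, ∀ g : F, Depends H g →
      ∃ w : ↥H ∗ FreeGroup Unit, w ∈ (phi H g).ker ∧ w ≠ 1 ∧ eqnDegree w ≤ n := by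
  have hex (d : F) : ∃ w : ↥H ∗ FreeGroup Unit, Depends H d → w ∈ (phi H d).ker ∧ w ≠ 1 := by
    by_cases hd : Depends H d
    · have hd' := hd
      rw [Depends, injective_iff_map_eq_one] at hd'
      push Not at hd'
      obtain ⟨w, hw⟩ := hd'
      exact ⟨w, fun _ => hw⟩
    · exact ⟨1, fun h => absurd h hd⟩
  choose w hw using hex
  refine ⟨hD.toFinset.sup fun d => eqnDegree (w d), fun g hg => ?_⟩
  obtain ⟨a, b, d, hdD, rfl⟩ := hdep g hg
  obtain ⟨hker, hne⟩ := hw d hg.of_mul_mul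
  refine ⟨eqnSubst a⁻¹ b⁻¹ (w d), ?_, ?_, ?_⟩
  · have h := DFunLike.congr_fun (phi_comp_eqnSubst a⁻¹ b⁻¹ (a * d * b : F)) (w d)
    rw [MonoidHom.mem_ker] at hker ⊢
    simpa [mul_assoc, hker] using h
  · rwa [Ne, map_eq_one_iff _ (eqnSubst_injective _ _)]
  · exact (eqnDegree_eqnSubst_le _ _ _).trans
      (Finset.le_sup (f := fun d => eqnDegree (w d)) (hD.mem_toFinset.2 hdD))

/-- A ping-pong criterion for an element to be independent of a subgroup. -/
theorem injective_phi_of_ping_pong {g : F} {X : Set F} (hX : X.Nonempty) (hX' : Xᶜ.Nonempty)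
    (hH : ∀ h ∈ H, h ≠ 1 → ∀ f ∈ X, h * f ∉ X)
    (hg : ∀ n : ℤ, n ≠ 0 → ∀ f ∉ X, g ^ n * f ∈ X) : Function.Injective (phi H g) := by
  let γ : FreeGroup Unit →* F := FreeGroup.lift fun _ => g
  have hγ (n : ℤ) : γ (FreeGroup.of () ^ n) = g ^ n := by simp [γ]
  obtain ⟨f₀, hf₀⟩ := hX'
  have hgn : ∀ n : ℤ, g ^ n = 1 → n = 0 := by
    intro n hn
    by_contra h0
    exact hf₀ (by simpa [hn] using hg n h0 f₀ hf₀)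
  have hγinj : Function.Injective γ := by
    rw [injective_iff_map_eq_one]
    intro z hz
    obtain ⟨n, rfl⟩ := FreeGroup.exists_zpow_of_unit z
    rw [hgn n (by rw [← hγ, hz]), zpow_zero]
  let K : Bool → Subgroup F := fun b => cond b H γ.range
  have key : Function.Injective (Monoid.CoprodI.lift fun b => (K b).subtype) := by
    refine Monoid.CoprodI.lift_injective_of_ping_pong _ (Or.inr ⟨false, ?_⟩)
      (fun b => cond b Xᶜ X) ?_ ?_ ?_
    · have : Infinite γ.range := (MonoidHom.ofInjective hγinj).toEquiv.infinite_iff.1 inferInstance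
      exact (Cardinal.ofNat_lt_aleph0 (n := 3)).le.trans (Cardinal.aleph0_le_mk γ.range)
    · rintro (_ | _)
      exacts [hX, ⟨f₀, hf₀⟩]
    · rintro (_ | _) (_ | _) hij
      · exact absurd rfl hij
      · exact disjoint_compl_right
      · exact disjoint_compl_left
      · exact absurd rfl hij
    · rintro (_ | _) (_ | _) hij ⟨h, hh⟩ hne
      · exact absurd rfl hij
      · obtain ⟨z, rfl⟩ := hh
        obtain ⟨n, rfl⟩ := FreeGroup.exists_zpow_of_unit z
        rintro _ ⟨f, hf, rfl⟩
        have hn : n ≠ 0 := by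
          rintro rfl
          exact hne (Subtype.ext (by simp))
        simpa [hγ] using hg n hn f hf
      · rintro _ ⟨f, hf, rfl⟩
        exact hH h hh (fun h1 => hne (Subtype.ext h1)) f hf
      · exact absurd rfl hij
  let ψ : (↥H ∗ FreeGroup Unit) →* Monoid.CoprodI fun b => K b :=
    Monoid.Coprod.lift (Monoid.CoprodI.of (M := fun b => K b) (i := true))
      ((Monoid.CoprodI.of (M := fun b => K b) (i := false)).comp γ.rangeRestrict)
  let ρ : (Monoid.CoprodI fun b => K b) →* (↥H ∗ FreeGroup Unit) :=
    Monoid.CoprodI.lift fun b => match b with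
      | true => Monoid.Coprod.inl
      | false => Monoid.Coprod.inr.comp (MonoidHom.ofInjective hγinj).symm.toMonoidHom
  have hρψ : ρ.comp ψ = MonoidHom.id _ := by
    refine Monoid.Coprod.hom_ext ?_ ?_
    · ext x
      simp [ρ, ψ]
    · refine MonoidHom.ext fun z => ?_
      have : (MonoidHom.ofInjective hγinj).symm (γ.rangeRestrict z) = z := by
        rw [MulEquiv.symm_apply_eq]
        rfl
      simp [ρ, ψ, this]
  have hψ : phi H g = (Monoid.CoprodI.lift fun b => (K b).subtype).comp ψ := by
    refine Monoid.Coprod.hom_ext ?_ ?_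
    · ext x
      simp [ψ, phi, K]
    · refine MonoidHom.ext fun z => ?_
      simp [ψ, phi, γ, K]
  rw [hψ]
  exact key.comp (Function.LeftInverse.injective (DFunLike.congr_fun hρψ))

end Degree

namespace FreeGroup

variable {α : Type*} [DecidableEq α]

section FirstLetter

theorem head?_toWord_ne_of_ne_one {a : FreeGroup α} (ha : a ≠ 1) :
    (1 : FreeGroup α).toWord.head? ≠ a.toWord.head? := by
  rw [toWord_one, List.head?_nil, ne_comm, Ne, List.head?_eq_none_iff, toWord_eq_nil_iff]
  exact ha

/-- If there is no cancellation in the product `a * b`, then it starts with the first letter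
of `a`. -/
theorem head?_toWord_mul {a b : FreeGroup α} (ha : a ≠ 1)
    (h : a⁻¹.toWord.head? ≠ b.toWord.head?) : (a * b).toWord.head? = a.toWord.head? := by
  have hred : IsReduced (a.toWord ++ b.toWord) := by
    refine List.isChain_append.2 ⟨isReduced_toWord, isReduced_toWord, ?_⟩
    rintro ⟨i, s⟩ hx ⟨j, t⟩ hy hij
    simp only at hij
    subst hij
    simp only [Option.mem_def] at hx hy
    rw [hy, toWord_inv, invRev, List.head?_reverse, List.getLast?_map, hx] at h
    cases s <;> cases t <;> simp_all
  rw [toWord_mul, hred.reduce_eq, List.head?_append_of_ne_nil _ (by simpa using ha)]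

theorem head?_toWord_pow_succ (a : FreeGroup α) (n : ℕ) :
    (a ^ (n + 1)).toWord.head? = a.toWord.head? := by
  have h (m : ℕ) := reduceCyclically.reduce_flatten_replicate_succ (isReduced_toWord (x := a)) m
  have h0 : a.toWord = _ := reduceCyclically.conj_conjugator_reduceCyclically a.toWord |>.symm
  rw [toWord_pow, h]
  conv_rhs => rw [h0]
  by_cases hc : reduceCyclically.conjugator a.toWord = []
  · simp [hc, List.head?_flatten_replicate]
  · simp [List.append_assoc, List.head?_append_of_ne_nil _ hc]

theorem head?_toWord_zpow (a : FreeGroup α) {n : ℤ} (hn : n ≠ 0) :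
    (a ^ n).toWord.head? = a.toWord.head? ∨ (a ^ n).toWord.head? = a⁻¹.toWord.head? := by
  obtain ⟨m, rfl | rfl⟩ := n.eq_nat_or_neg
  · obtain ⟨m, rfl⟩ := Nat.exists_eq_succ_of_ne_zero (n := m) (by simpa using hn)
    left
    rw [zpow_natCast, head?_toWord_pow_succ]
  · obtain ⟨m, rfl⟩ := Nat.exists_eq_succ_of_ne_zero (n := m) (by simpa using hn)
    right
    rw [zpow_neg, zpow_natCast, ← inv_pow, head?_toWord_pow_succ]

theorem zpow_ne_one {a : FreeGroup α} (ha : a ≠ 1) {n : ℤ} (hn : n ≠ 0) : a ^ n ≠ 1 := by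
  intro h
  have := head?_toWord_ne_of_ne_one ha
  have := head?_toWord_ne_of_ne_one (inv_ne_one.2 ha)
  have := head?_toWord_zpow a hn
  simp_all

variable {H : Subgroup (FreeGroup α)} {p q k : FreeGroup α}

/-- A conjugate `p * k * p⁻¹` is independent of `H` if the geodesics from `p` to its translates
by `H` do not start with the first letter of `k` or of `k⁻¹`. -/
theorem injective_phi_conj (hk : k ≠ 1)
    (h₁ : ∀ h ∈ H, (p⁻¹ * h * p).toWord.head? ≠ k.toWord.head?)
    (h₂ : ∀ h ∈ H, (p⁻¹ * h * p).toWord.head? ≠ k⁻¹.toWord.head?) :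
    Function.Injective (phi H (p * k * p⁻¹)) := by
  refine injective_phi_of_ping_pong (X := {f | (p⁻¹ * f).toWord.head? = k.toWord.head? ∨
    (p⁻¹ * f).toWord.head? = k⁻¹.toWord.head?}) ⟨p * k, by simp⟩ ⟨p, ?_⟩ ?_ ?_
  · refine not_or.2 ?_
    rw [inv_mul_cancel]
    exact ⟨head?_toWord_ne_of_ne_one hk, head?_toWord_ne_of_ne_one (inv_ne_one.2 hk)⟩
  · intro h hh hne f hf
    have hinv : (p⁻¹ * h * p)⁻¹ = p⁻¹ * h⁻¹ * p := by group
    have h₃ := h₁ _ (inv_mem hh)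
    have h₄ := h₂ _ (inv_mem hh)
    have : (p⁻¹ * (h * f)).toWord.head? = (p⁻¹ * h * p).toWord.head? := by
      have e : p⁻¹ * (h * f) = (p⁻¹ * h * p) * (p⁻¹ * f) := by group
      rw [e]
      refine head?_toWord_mul (by rwa [Ne, mul_assoc, inv_mul_eq_one, right_eq_mul]) ?_
      rw [hinv]
      rcases hf with hf | hf <;> rw [hf] <;> assumption
    simpa only [Set.mem_ofPred_eq, this, not_or] using ⟨h₁ h hh, h₂ h hh⟩
  · intro n hn f hf
    simp only [Set.mem_ofPred_eq, not_or] at hf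
    have : (p⁻¹ * ((p * k * p⁻¹) ^ n * f)).toWord.head? = (k ^ n).toWord.head? := by
      have e : p⁻¹ * ((p * k * p⁻¹) ^ n * f) = k ^ n * (p⁻¹ * f) := by
        rw [conj_zpow]; group
      rw [e]
      refine head?_toWord_mul (zpow_ne_one hk hn) ?_
      rw [← zpow_neg]
      rcases head?_toWord_zpow k (neg_ne_zero.2 hn) with h | h <;> rw [h]
      exacts [Ne.symm hf.1, Ne.symm hf.2]
    simpa only [Set.mem_ofPred_eq, this] using head?_toWord_zpow k hn

/-- `p * k * q⁻¹` is independent of `H` if `p` and `q` lie in different `H`-orbits and the geodesics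
between their translates start neither at `p` with the first letter of `k` nor at `q` with the
first letter of `k⁻¹`. -/
theorem injective_phi_of_conj_ne (hk : k ≠ 1)
    (hpp : ∀ h ∈ H, (p⁻¹ * h * p).toWord.head? ≠ k.toWord.head?)
    (hpq : ∀ h ∈ H, (p⁻¹ * h * q).toWord.head? ≠ k.toWord.head?)
    (hqp : ∀ h ∈ H, (q⁻¹ * h * p).toWord.head? ≠ k⁻¹.toWord.head?)
    (hqq : ∀ h ∈ H, (q⁻¹ * h * q).toWord.head? ≠ k⁻¹.toWord.head?)
    (hne : ∀ h ∈ H, p ≠ h * q) :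
    Function.Injective (phi H (p * k * q⁻¹)) := by
  have hne' : ∀ h ∈ H, p⁻¹ * h * q ≠ 1 := by
    intro h hh h1
    rw [mul_assoc, inv_mul_eq_one] at h1
    exact hne h hh h1
  have hne'' : ∀ h ∈ H, q⁻¹ * h * p ≠ 1 := by
    intro h hh h1
    refine hne' _ (inv_mem hh) ?_
    rw [← inv_eq_one, ← h1]
    group
  set c := k.toWord.head?
  set c' := k⁻¹.toWord.head?
  have hp (h f) (hh : h ∈ H) (h1 : h ≠ 1) (hf : (p⁻¹ * f).toWord.head? = c) :
      (p⁻¹ * (h * f)).toWord.head? ≠ c := by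
    have e : p⁻¹ * (h * f) = (p⁻¹ * h * p) * (p⁻¹ * f) := by group
    rw [e, head?_toWord_mul]
    · exact hpp h hh
    · rwa [Ne, mul_assoc, inv_mul_eq_one, right_eq_mul]
    · rw [hf]
      convert hpp _ (inv_mem hh) using 3
      group
  have hq (h f) (hh : h ∈ H) (h1 : h ≠ 1) (hf : (q⁻¹ * f).toWord.head? = c') :
      (q⁻¹ * (h * f)).toWord.head? ≠ c' := by
    have e : q⁻¹ * (h * f) = (q⁻¹ * h * q) * (q⁻¹ * f) := by group
    rw [e, head?_toWord_mul]
    · exact hqq h hh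
    · rwa [Ne, mul_assoc, inv_mul_eq_one, right_eq_mul]
    · rw [hf]
      convert hqq _ (inv_mem hh) using 3
      group
  have hp' (h f) (hh : h ∈ H) (hf : (p⁻¹ * f).toWord.head? = c) :
      (q⁻¹ * (h * f)).toWord.head? ≠ c' := by
    have e : q⁻¹ * (h * f) = (q⁻¹ * h * p) * (p⁻¹ * f) := by group
    rw [e, head?_toWord_mul (hne'' h hh)]
    · exact hqp h hh
    · rw [hf]
      convert hpq _ (inv_mem hh) using 3
      group
  have hq' (h f) (hh : h ∈ H) (hf : (q⁻¹ * f).toWord.head? = c') :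
      (p⁻¹ * (h * f)).toWord.head? ≠ c := by
    have e : p⁻¹ * (h * f) = (p⁻¹ * h * q) * (q⁻¹ * f) := by group
    rw [e, head?_toWord_mul (hne' h hh)]
    · exact hpq h hh
    · rw [hf]
      convert hqp _ (inv_mem hh) using 3
      group
  have hdisj (f) (hf : (p⁻¹ * f).toWord.head? = c) : (q⁻¹ * f).toWord.head? ≠ c' := by
    simpa using hp' 1 f (one_mem H) hf
  set g := p * k * q⁻¹ with hgdef
  have hgp (f) (hf : (q⁻¹ * f).toWord.head? ≠ c') : (p⁻¹ * (g * f)).toWord.head? = c := by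
    have e : p⁻¹ * (g * f) = k * (q⁻¹ * f) := by rw [hgdef]; group
    rw [e]
    exact head?_toWord_mul hk hf.symm
  have hgq (f) (hf : (p⁻¹ * f).toWord.head? ≠ c) : (q⁻¹ * (g⁻¹ * f)).toWord.head? = c' := by
    have e : q⁻¹ * (g⁻¹ * f) = k⁻¹ * (p⁻¹ * f) := by rw [hgdef]; group
    rw [e]
    exact head?_toWord_mul (inv_ne_one.2 hk) (by simpa using hf.symm)
  refine injective_phi_of_ping_pong (X := {f | (p⁻¹ * f).toWord.head? = c ∨
    (q⁻¹ * f).toWord.head? = c'}) ⟨p * k, by simp [c]⟩ ⟨p, ?_⟩ ?_ ?_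
  · simpa [c] using ⟨head?_toWord_ne_of_ne_one hk, by simpa using hqp 1 (one_mem H)⟩
  · rintro h hh h1 f (hf | hf)
    · exact not_or.2 ⟨hp h f hh h1 hf, hp' h f hh hf⟩
    · exact not_or.2 ⟨hq' h f hh hf, hq h f hh h1 hf⟩
  · intro n hn f hf
    obtain ⟨hfp, hfq⟩ := not_or.1 hf
    obtain ⟨m, rfl | rfl⟩ := n.eq_nat_or_neg
    · left
      obtain ⟨m, rfl⟩ := Nat.exists_eq_succ_of_ne_zero (n := m) (by simpa using hn)
      clear hn
      rw [zpow_natCast]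
      induction m with
      | zero => simpa using hgp f hfq
      | succ m ih =>
        rw [pow_succ', mul_assoc]
        exact hgp _ (hdisj _ ih)
    · right
      obtain ⟨m, rfl⟩ := Nat.exists_eq_succ_of_ne_zero (n := m) (by simpa using hn)
      clear hn
      rw [zpow_neg, zpow_natCast, ← inv_pow]
      induction m with
      | zero => simpa using hgq f hfp
      | succ m ih =>
        rw [pow_succ', mul_assoc]
        exact hgq _ fun h => hdisj _ h ih

end FirstLetter

section Prefixes

theorem reduce_eq_of_isPrefix {L L' : List (α × Bool)} (hL : IsReduced L) (h : L' <+: L) :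
    reduce L' = L' := by
  obtain ⟨t, rfl⟩ := h
  exact IsReduced.reduce_eq (List.IsChain.left_of_append hL)

theorem toWord_mk_of_isPrefix {a : FreeGroup α} {L : List (α × Bool)} (h : L <+: a.toWord) :
    (mk L).toWord = L :=
  reduce_eq_of_isPrefix isReduced_toWord h

/-- A path from `1` to `a` in the Cayley graph of a free group visits every prefix of `a`. -/
theorem exists_isPrefix_of_isPrefix_reduce {L : List (α × Bool)} {f : FreeGroup α}
    (h : f.toWord <+: reduce L) : ∃ L', L' <+: L ∧ mk L' = f := by
  induction L generalizing f with
  | nil =>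
    refine ⟨[], List.prefix_rfl, ?_⟩
    simpa [one_eq_mk, eq_comm] using h
  | cons x L ih =>
    rw [reduce.cons] at h
    have hcons {u : List (α × Bool)} (hu : u <+: reduce L) :
        ∃ L', L' <+: x :: L ∧ mk L' = mk [x] * mk u := by
      have hured := reduce_eq_of_isPrefix (isReduced_iff_reduce_eq.2 reduce.idem) hu
      obtain ⟨L', hL', e⟩ := ih (f := mk u) (by rwa [toWord_mk, hured])
      exact ⟨x :: L', by simpa using hL', by rw [← e, mul_mk, List.singleton_append]⟩
    have hcons' {u : List (α × Bool)} (hu : u <+: x :: reduce L) :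
        ∃ L', L' <+: x :: L ∧ mk L' = mk u := by
      rcases List.prefix_cons_iff.1 hu with rfl | ⟨u', rfl, hu'⟩
      · exact ⟨[], List.nil_prefix, rfl⟩
      · obtain ⟨L', h, e⟩ := hcons hu'
        exact ⟨L', h, by rw [e, mul_mk, List.singleton_append]⟩
    rw [← mk_toWord (x := f)]
    cases hr : reduce L with
    | nil =>
      rw [hr] at h
      exact hcons' (by simpa [hr] using h)
    | cons y t =>
      simp only [hr] at h
      split_ifs at h with hxy
      · obtain ⟨L', hL', e⟩ := hcons (u := y :: f.toWord) (by simpa [hr] using h)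
        refine ⟨L', hL', ?_⟩
        obtain ⟨i, s⟩ := x
        obtain ⟨j, t⟩ := y
        simp only at hxy
        obtain ⟨rfl, rfl⟩ := hxy
        rw [e, ← List.singleton_append (l := f.toWord), ← mul_mk, ← mul_assoc, mul_mk]
        convert one_mul _
        apply Quot.sound
        simp
      · exact hcons' (by simpa [hr] using h)

/-- A prefix of `a * b` is a prefix of `a`, or `a` times a prefix of `b`. -/
theorem isPrefix_or_of_isPrefix_mul {a b f : FreeGroup α} (h : f.toWord <+: (a * b).toWord) :
    f.toWord <+: a.toWord ∨ (a⁻¹ * f).toWord <+: b.toWord := by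
  rw [toWord_mul] at h
  obtain ⟨L, hL, rfl⟩ := exists_isPrefix_of_isPrefix_reduce h
  rcases List.prefix_or_prefix_of_prefix hL (List.prefix_append _ _) with hL' | ⟨t, rfl⟩
  · left
    rwa [toWord_mk_of_isPrefix hL']
  · right
    have ht := (List.prefix_append_right_inj _).1 hL
    rwa [← mul_mk, mk_toWord, inv_mul_cancel_left, toWord_mk_of_isPrefix ht]

theorem isPrefix_inv_of_isPrefix {a f : FreeGroup α} (h : f.toWord <+: a.toWord) :
    (a⁻¹ * f).toWord <+: a⁻¹.toWord := by
  obtain ⟨t, ht⟩ := h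
  have ha : a = f * mk t := by rw [← mk_toWord (x := a), ← ht, ← mul_mk, mk_toWord]
  have e : a⁻¹ * f = mk (invRev t) := by rw [ha, ← inv_mk]; group
  have hp : invRev t <+: a⁻¹.toWord := by
    rw [toWord_inv, ← ht]
    simp [invRev]
  rwa [e, toWord_mk_of_isPrefix hp]

end Prefixes

section Hull

/-- The smallest subtree of the Cayley graph containing `H`, as a set of vertices. -/
def hull (H : Subgroup (FreeGroup α)) : Set (FreeGroup α) :=
  {f | ∃ h ∈ H, f.toWord <+: h.toWord}

variable {H : Subgroup (FreeGroup α)} {p q g k h : FreeGroup α}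

theorem one_mem_hull : (1 : FreeGroup α) ∈ hull H := ⟨1, one_mem H, by simp⟩

theorem mem_hull_of_isPrefix (hq : q ∈ hull H) (hp : p.toWord <+: q.toWord) : p ∈ hull H := by
  obtain ⟨h, hh, hqh⟩ := hq
  exact ⟨h, hh, hp.trans hqh⟩

theorem mul_mem_hull (hh : h ∈ H) (hp : p ∈ hull H) : h * p ∈ hull H := by
  obtain ⟨a, ha, hpa⟩ := hp
  rw [← inv_mul_cancel_left h a] at hpa
  rcases isPrefix_or_of_isPrefix_mul hpa with hpa | hpa
  · exact ⟨h, hh, by simpa using isPrefix_inv_of_isPrefix hpa⟩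
  · exact ⟨h * a, mul_mem hh ha, by simpa using hpa⟩

/-- The first edge on the geodesic between two points of the hull stays in the hull. -/
theorem mul_mk_mem_hull (hp : p ∈ hull H) (hq : q ∈ hull H) {c : α × Bool}
    (hc : (p⁻¹ * q).toWord.head? = some c) : p * mk [c] ∈ hull H := by
  have hpre : [c] <+: (p⁻¹ * q).toWord := by
    obtain ⟨t, ht⟩ := List.head?_eq_some_iff.1 hc
    exact ⟨t, by simp [ht]⟩
  rw [← toWord_mk_of_isPrefix hpre] at hpre
  rcases isPrefix_or_of_isPrefix_mul hpre with h | h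
  · exact mem_hull_of_isPrefix hp (by simpa using isPrefix_inv_of_isPrefix h)
  · exact mem_hull_of_isPrefix hq (by simpa using h)

/-- The hull of a finitely generated subgroup consists of finitely many orbits. -/
theorem exists_finite_hull (hH : H.FG) :
    ∃ P : Set (FreeGroup α), P.Finite ∧ ∀ f ∈ hull H, ∃ h ∈ H, ∃ p ∈ P, f = h * p := by
  obtain ⟨S, rfl⟩ := hH
  have hfin (s : FreeGroup α) : {f : FreeGroup α | f.toWord <+: s.toWord}.Finite := by
    refine Set.Finite.preimage toWord_injective.injOn (s := {L | L <+: s.toWord}) ?_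
    exact (List.finite_toSet s.toWord.inits).subset fun L hL => by simpa using hL
  refine ⟨(⋃ s ∈ S, {f : FreeGroup α | f.toWord <+: s.toWord}) ∪ {1},
    (S.finite_toSet.biUnion fun s _ => hfin s).union (Set.finite_singleton 1), ?_⟩
  rintro f ⟨h, hh, hf⟩
  induction hh using Subgroup.closure_induction generalizing f with
  | mem s hs => exact ⟨1, one_mem _, f, Or.inl (Set.mem_biUnion hs hf), by simp⟩
  | one => exact ⟨1, one_mem _, 1, Or.inr rfl, by simpa using hf⟩
  | mul a b ha _ iha ihb =>
    rcases isPrefix_or_of_isPrefix_mul hf with hf | hf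
    · exact iha f hf
    · obtain ⟨k, hk, p, hp, e⟩ := ihb _ hf
      exact ⟨a * k, mul_mem ha hk, p, hp, by rw [mul_assoc, ← e, mul_inv_cancel_left]⟩
  | inv a ha iha =>
    obtain ⟨k, hk, p, hp, e⟩ := iha (a * f) (by simpa using isPrefix_inv_of_isPrefix hf)
    exact ⟨a⁻¹ * k, mul_mem (inv_mem ha) hk, p, hp, by rw [mul_assoc, ← e, inv_mul_cancel_left]⟩

theorem head?_toWord_ne_of_minimal {X : Set (FreeGroup α)}
    (hk : k ≠ 1) (hX : ∀ c k', p * mk [c] ∈ X → k = mk [c] * k' → k.norm ≤ k'.norm)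
    (hXc : ∀ c, (p⁻¹ * q).toWord.head? = some c → p * mk [c] ∈ X) :
    (p⁻¹ * q).toWord.head? ≠ k.toWord.head? := by
  intro h
  cases hw : k.toWord with
  | nil => exact hk (toWord_eq_nil_iff.1 hw)
  | cons c t =>
    rw [hw, List.head?_cons] at h
    have := hX c (mk t) (hXc c h)
      (by rw [mul_mk, List.singleton_append, ← hw, mk_toWord])
    have h2 := norm_mk_le (L₁ := t)
    rw [norm, hw, List.length_cons] at this
    omega

/-- If the hull of `H` is disjoint from its translate by `g`, then `g` is independent of `H`. -/
theorem injective_phi_of_forall_ne (hg : ∀ p ∈ hull H, ∀ q ∈ hull H, g ≠ p * q⁻¹) :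
    Function.Injective (phi H g) := by
  obtain ⟨⟨p, k, q⟩, ⟨hp, hq, rfl⟩, hmin⟩ :=
    (measure fun t : FreeGroup α × FreeGroup α × FreeGroup α => t.2.1.norm).wf.has_min
      {t | t.1 ∈ hull H ∧ t.2.2 ∈ hull H ∧ g = t.1 * t.2.1 * t.2.2⁻¹}
      ⟨(1, g, 1), one_mem_hull, one_mem_hull, by simp⟩
  have hk : k ≠ 1 := by
    rintro rfl
    exact hg p hp q hq (by simp)
  have hp' (b) (hb : b ∈ hull H) : (p⁻¹ * b).toWord.head? ≠ k.toWord.head? := by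
    refine head?_toWord_ne_of_minimal (X := hull H) hk ?_ fun c hc => mul_mk_mem_hull hp hb hc
    intro c k' hc e
    exact not_lt.1 (hmin (p * mk [c], k', q) ⟨hc, hq, by simp [e, mul_assoc]⟩)
  have hq' (b) (hb : b ∈ hull H) : (q⁻¹ * b).toWord.head? ≠ k⁻¹.toWord.head? := by
    refine head?_toWord_ne_of_minimal (X := hull H) (inv_ne_one.2 hk) ?_
      fun c hc => mul_mk_mem_hull hq hb hc
    intro c k' hc e
    have hk' : k = k'⁻¹ * (mk [c])⁻¹ := by rw [← mul_inv_rev, ← e, inv_inv]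
    have hle : ¬ k'⁻¹.norm < k.norm :=
      hmin (p, k'⁻¹, q * mk [c]) ⟨hp, hc, by simp only [hk']; group⟩
    rw [norm_inv_eq] at hle ⊢
    exact not_lt.1 hle
  by_cases hpq : ∃ h ∈ H, p = h * q
  · obtain ⟨h, hh, rfl⟩ := hpq
    have h₂ (b) (hb : b ∈ H) : ((h * q)⁻¹ * b * (h * q)).toWord.head? ≠ k⁻¹.toWord.head? := by
      have := hq' (h⁻¹ * b * h * q)
        (mul_mem_hull (mul_mem (mul_mem (inv_mem hh) hb) hh) hq)
      simpa [mul_assoc] using this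
    have h₁ (b) (hb : b ∈ H) : ((h * q)⁻¹ * b * (h * q)).toWord.head? ≠ k.toWord.head? := by
      have := hp' _ (mul_mem_hull hb hp)
      rwa [← mul_assoc] at this
    have hinj := injective_phi_conj hk h₁ h₂
    by_contra hdep
    refine Depends.of_mul_mul (H := H) (a := 1) (b := ⟨h, hh⟩) ?_ hinj
    convert hdep using 2
    simp [mul_assoc]
  · push Not at hpq
    refine injective_phi_of_conj_ne hk ?_ ?_ ?_ ?_ hpq <;> intro h hh <;> rw [mul_assoc]
    exacts [hp' _ (mul_mem_hull hh hp), hp' _ (mul_mem_hull hh hq),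
      hq' _ (mul_mem_hull hh hp), hq' _ (mul_mem_hull hh hq)]

/-- The elements depending on a finitely generated subgroup `H` lie in finitely many double
cosets of `H`. -/
theorem exists_finite_doubleCosets (hH : H.FG) :
    ∃ D : Set (FreeGroup α), D.Finite ∧
      ∀ g, Depends H g → ∃ a ∈ H, ∃ b ∈ H, ∃ d ∈ D, g = a * d * b := by
  obtain ⟨P, hP, hHP⟩ := exists_finite_hull hH
  refine ⟨Set.image2 (fun p q => p * q⁻¹) P P, hP.image2 _ hP, fun g hg => ?_⟩
  by_contra hcon
  refine hg (injective_phi_of_forall_ne fun p hp q hq hpq => hcon ?_)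
  obtain ⟨a, ha, p', hp', rfl⟩ := hHP p hp
  obtain ⟨b, hb, q', hq', rfl⟩ := hHP q hq
  exact ⟨a, ha, b⁻¹, inv_mem hb, _, Set.mem_image2_of_mem hp' hq', by simp [hpq, mul_assoc]⟩

end Hull

end FreeGroup

/-- for finitely generated `H` there is a bound `n` such that every `g`
depending on `H` satisfies a nontrivial equation over `H` of degree at most `n`. -/
theorem exists_degree_bound [Group F] [IsFreeGroup F] (H : Subgroup F) (hH : H.FG) :
    ∃ n : ℕ, ∀ g : F, Depends H g →
      ∃ w : ↥H ∗ FreeGroup Unit, w ∈ (phi H g).ker ∧ w ≠ 1 ∧ eqnDegree w ≤ n := by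
  classical
  let e := IsFreeGroup.toFreeGroup F
  have hfg : (H.map (e : F →* FreeGroup (IsFreeGroup.Generators F))).FG := by
    obtain ⟨S, rfl⟩ := hH
    exact ⟨S.image e, by simp [MonoidHom.map_closure]⟩
  obtain ⟨D, hD, hdep⟩ := FreeGroup.exists_finite_doubleCosets hfg
  refine exists_degree_bound_of_finite_doubleCosets (D := e ⁻¹' D)
    (hD.preimage e.injective.injOn) fun g hg => ?_
  obtain ⟨_, ⟨a, ha, rfl⟩, _, ⟨b, hb, rfl⟩, d, hd, hgd⟩ := hdep (e g) (hg.map e)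
  refine ⟨⟨a, ha⟩, ⟨b, hb⟩, e.symm d, by simpa using hd, e.injective ?_⟩
  simpa using hgd
end
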